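/- arXiv:2010.09806 — 3 statements merged into one kernel-verified Lean document; each statement's English description precedes it below -/
import Mathlib

section
/- Let G act by measure-preserving transformations on a probability space (X, μ) with Følner sequence {F_n}. For any admissible semimetric ρ ≤ 1 on X and any ε ∈ (0,1) with ℍ_ε(X, μ, ρ) > 0, one has ℍ_{2√ε}(X, μ, G^n_{av} ρ) ≤ 2|F_n| · ℍ_ε(X, μ, ρ), so in particular ℍ_{2√ε}(X, μ, G^n_{av} ρ) = O(|F_n|). -/
open MeasureTheory Filter Pointwise

section EpsEntropy

variable {α : Type*} [MeasurableSpace α]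

/-- `k` works for an `ε`-cover: `X = X₀ ∪ … ∪ X_k` with `μ X₀ < ε` and `diam_ρ X_i < ε` for `i ≥ 1`. -/
def IsEntCover (μ : Measure α) (ρ : α → α → ℝ) (ε : ℝ) (k : ℕ) : Prop :=
  ∃ A : Fin (k + 1) → Set α, (∀ i, MeasurableSet (A i)) ∧ (⋃ i, A i) = Set.univ ∧
    μ (A 0) < ENNReal.ofReal ε ∧
    ∀ i : Fin (k + 1), i ≠ 0 → ∀ x ∈ A i, ∀ y ∈ A i, ρ x y < ε

/-- The ε-entropy `ℍ_ε(X, μ, ρ) = log₂ k` for the minimal admissible `k`. -/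
noncomputable def epsEntropy (μ : Measure α) (ρ : α → α → ℝ) (ε : ℝ) : ℝ :=
  Real.logb 2 ((sInf {k : ℕ | 0 < k ∧ IsEntCover μ ρ ε k} : ℕ) : ℝ)

/-- A semimetric is admissible iff all of its `ε`-entropies are finite. -/
def Admissible (μ : Measure α) (ρ : α → α → ℝ) : Prop :=
  ∀ ε : ℝ, 0 < ε → ∃ k : ℕ, 0 < k ∧ IsEntCover μ ρ ε k

end EpsEntropy

/-!
Fix an `ε`-cover `A₀, …, A_k` of `X` with exceptional set `A₀`, and sort the points `x` by their
itinerary, which records for each `g ∈ Fₙ` an index `i` with `g • x ∈ A_i`. By Markov's inequality,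
the points visiting `A₀` with frequency at least `√ε` have measure less than `√ε`. For two other
points with the same itinerary, `ρ (g • x) (g • y) < ε` unless `g • x ∈ A₀`, so their average
distance is less than `ε + √ε ≤ 2√ε`. There are `(k + 1) ^ |Fₙ|` itineraries, and `k + 1 ≤ k²` as
soon as `k ≥ 2`, which is what positivity of the entropy means.
-/

section Visits

variable {ι X Y : Type*} {T : ι → Y → X} {s : Finset ι} {A : Set X}

/-- The number of visits to `A` by the images of `x` under the maps `T g`, `g ∈ s`. -/
noncomputable def visitCount (T : ι → Y → X) (s : Finset ι) (A : Set X) (x : Y) : ℕ :=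
  ∑ g ∈ s, A.indicator 1 (T g x)

lemma natCast_visitCount {R : Type*} [AddCommMonoidWithOne R] (x : Y) :
    (visitCount T s A x : R) = ∑ g ∈ s, A.indicator 1 (T g x) := by
  classical
  simp only [visitCount, Nat.cast_sum, Set.indicator_apply, Pi.one_apply, Nat.cast_ite,
    Nat.cast_one, Nat.cast_zero]

variable [MeasurableSpace X] [MeasurableSpace Y] {μ : Measure X} {ν : Measure Y}

lemma measurable_visitCount (hT : ∀ g ∈ s, Measurable (T g)) (hA : MeasurableSet A) :
    Measurable (visitCount T s A) :=
  Finset.measurable_sum s fun g hg => (measurable_one.indicator hA).comp (hT g hg)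

lemma lintegral_visitCount (hT : ∀ g ∈ s, MeasurePreserving (T g) ν μ) (hA : MeasurableSet A) :
    ∫⁻ x, visitCount T s A x ∂ν = s.card * μ A := by
  have hind : Measurable (A.indicator (1 : X → ENNReal)) := measurable_one.indicator hA
  simp only [natCast_visitCount]
  calc ∫⁻ x, ∑ g ∈ s, A.indicator (1 : X → ENNReal) (T g x) ∂ν
      = ∑ g ∈ s, ∫⁻ x, A.indicator (1 : X → ENNReal) (T g x) ∂ν :=
        lintegral_finsetSum' s fun g hg => (hind.comp (hT g hg).measurable).aemeasurable
    _ = ∑ _g ∈ s, μ A := Finset.sum_congr rfl fun g hg => by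
        rw [(hT g hg).lintegral_comp hind, lintegral_indicator_one hA]
    _ = s.card * μ A := by rw [Finset.sum_const, nsmul_eq_mul]

lemma ofReal_mul_measure_mul_card_le_visitCount_le (hs : s.Nonempty)
    (hT : ∀ g ∈ s, MeasurePreserving (T g) ν μ) (hA : MeasurableSet A) (t : ℝ) :
    ENNReal.ofReal t * ν {x | t * s.card ≤ visitCount T s A x} ≤ μ A := by
  have hmeas : Measurable fun x => (visitCount T s A x : ENNReal) :=
    measurable_from_top.comp (measurable_visitCount (fun g hg => (hT g hg).measurable) hA)
  have hsub : {x | t * s.card ≤ visitCount T s A x} ⊆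
      {x | s.card * ENNReal.ofReal t ≤ visitCount T s A x} := fun x hx => by
    simpa [ENNReal.ofReal_mul', mul_comm] using ENNReal.ofReal_le_ofReal hx
  refine (ENNReal.mul_le_mul_iff_right (Nat.cast_ne_zero.2 hs.card_ne_zero)
    (ENNReal.natCast_ne_top s.card)).1 ?_
  calc s.card * (ENNReal.ofReal t * ν {x | t * s.card ≤ visitCount T s A x})
      ≤ s.card * ENNReal.ofReal t * ν {x | s.card * ENNReal.ofReal t ≤ visitCount T s A x} := by
        rw [← mul_assoc]
        gcongr
    _ ≤ ∫⁻ x, visitCount T s A x ∂ν := mul_meas_ge_le_lintegral hmeas _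
    _ = s.card * μ A := lintegral_visitCount hT hA

end Visits

section Average

variable {ι X Y : Type*} {T : ι → Y → X} {s : Finset ι} {ρ : X → X → ℝ} {M : ℝ}

/-- The average of the pullbacks of `ρ` along the maps `T g`, `g ∈ s`. For the translations
`T g x = g • x` and `s = F n` this is `Gⁿ_av ρ`. -/
noncomputable def avgPullback (T : ι → Y → X) (s : Finset ι) (ρ : X → X → ℝ) (x y : Y) : ℝ :=
  (s.card : ℝ)⁻¹ * ∑ g ∈ s, ρ (T g x) (T g y)

lemma avgPullback_lt_of_visitCount_le (hs : s.Nonempty) (hM : 0 ≤ M) (hbd : ∀ x y, ρ x y ≤ M)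
    {A : Set X} {ε t : ℝ} (hε : 0 < ε) {x y : Y}
    (hρ : ∀ g ∈ s, T g x ∉ A → ρ (T g x) (T g y) < ε)
    (hvisit : visitCount T s A x ≤ t * s.card) :
    avgPullback T s ρ x y < ε + M * t := by
  have hterm : ∀ g ∈ s, ρ (T g x) (T g y) < ε + M * A.indicator 1 (T g x) := fun g hg => by
    by_cases hgx : T g x ∈ A
    · rw [Set.indicator_of_mem hgx, Pi.one_apply, mul_one]
      exact (hbd _ _).trans_lt (lt_add_of_pos_left M hε)
    · rw [Set.indicator_of_notMem hgx, mul_zero, add_zero]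
      exact hρ g hg hgx
  rw [avgPullback, inv_mul_lt_iff₀ (Nat.cast_pos.2 hs.card_pos)]
  calc ∑ g ∈ s, ρ (T g x) (T g y)
      < ∑ g ∈ s, (ε + M * A.indicator 1 (T g x)) := Finset.sum_lt_sum_of_nonempty hs hterm
    _ = s.card * ε + M * visitCount T s A x := by
        rw [Finset.sum_add_distrib, Finset.sum_const, nsmul_eq_mul, ← Finset.mul_sum,
          natCast_visitCount]
    _ ≤ s.card * ε + M * (t * s.card) := by gcongr
    _ = s.card * (ε + M * t) := by ring

end Average

namespace IsEntCover

variable {ι X Y : Type*} [MeasurableSpace X] {μ : Measure X} {ρ : X → X → ℝ} {ε : ℝ} {k : ℕ}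

lemma pos (h : IsEntCover μ ρ ε k) : 0 < ε := by
  obtain ⟨A, -, -, hμ, -⟩ := h
  exact ENNReal.ofReal_pos.1 (pos_of_gt hμ)

lemma of_fintype [Fintype ι] {B₀ : Set X} {B : ι → Set X} (hB₀ : MeasurableSet B₀)
    (hB : ∀ i, MeasurableSet (B i)) (hcover : ∀ x ∉ B₀, ∃ i, x ∈ B i)
    (hμ : μ B₀ < ENNReal.ofReal ε) (hdiam : ∀ i, ∀ x ∈ B i, ∀ y ∈ B i, ρ x y < ε) :
    IsEntCover μ ρ ε (Fintype.card ι) := by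
  let e := Fintype.equivFin ι
  refine ⟨Fin.cons B₀ fun j => B (e.symm j), Fin.cases hB₀ fun j => hB _, ?_, hμ,
    Fin.cases (fun h => absurd rfl h) fun j _ => hdiam _⟩
  refine Set.eq_univ_of_forall fun x => Set.mem_iUnion.2 ?_
  by_cases hx : x ∈ B₀
  · exact ⟨0, hx⟩
  · obtain ⟨i, hi⟩ := hcover x hx
    exact ⟨(e i).succ, by simpa only [Fin.cons_succ, e.symm_apply_apply] using hi⟩

lemma average [MeasurableSpace Y] {ν : Measure Y} {T : ι → Y → X} {s : Finset ι}
    (h : IsEntCover μ ρ ε k) (hs : s.Nonempty) (hT : ∀ g ∈ s, MeasurePreserving (T g) ν μ) {M : ℝ}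
    (hM : 0 ≤ M) (hbd : ∀ x y, ρ x y ≤ M) {t δ : ℝ} (ht : 0 < t) (hεδ : ε ≤ t * δ)
    (hδ : ε + M * t ≤ δ) :
    IsEntCover ν (avgPullback T s ρ) δ ((k + 1) ^ s.card) := by
  classical
  have hε := h.pos
  obtain ⟨A, hA, hcover, hμ, hdiam⟩ := h
  have hTmeas : ∀ g ∈ s, Measurable (T g) := fun g hg => (hT g hg).measurable
  let B₀ : Set Y := {x | t * s.card ≤ visitCount T s (A 0) x}
  let B (f : s → Fin (k + 1)) : Set Y := B₀ᶜ ∩ ⋂ g : s, T g ⁻¹' A (f g)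
  have hB₀ : MeasurableSet B₀ := measurableSet_le measurable_const
    (measurable_from_top.comp (measurable_visitCount hTmeas (hA 0)))
  have hB (f) : MeasurableSet (B f) :=
    hB₀.compl.inter (.iInter fun g => hTmeas g g.2 (hA (f g)))
  have hcoverB : ∀ x ∉ B₀, ∃ f, x ∈ B f := fun x hx => by
    have hmem (g : s) : ∃ i, T g x ∈ A i := Set.iUnion_eq_univ_iff.1 hcover (T g x)
    choose f hf using hmem
    exact ⟨f, hx, Set.mem_iInter.2 hf⟩
  have hνB₀ : ν B₀ < ENNReal.ofReal δ := lt_of_mul_lt_mul_left' <|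
    calc ENNReal.ofReal t * ν B₀ ≤ μ (A 0) :=
          ofReal_mul_measure_mul_card_le_visitCount_le hs hT (hA 0) t
      _ < ENNReal.ofReal ε := hμ
      _ ≤ ENNReal.ofReal t * ENNReal.ofReal δ := by
          rw [← ENNReal.ofReal_mul ht.le]
          exact ENNReal.ofReal_le_ofReal hεδ
  have hdiamB : ∀ f, ∀ x ∈ B f, ∀ y ∈ B f, avgPullback T s ρ x y < δ := by
    rintro f x ⟨hxB₀, hx⟩ y ⟨-, hy⟩
    rw [Set.mem_iInter] at hx hy
    have hvisit : visitCount T s (A 0) x ≤ t * s.card := le_of_not_ge fun h => hxB₀ h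
    have hρ : ∀ g ∈ s, T g x ∉ A 0 → ρ (T g x) (T g y) < ε := fun g hg hgx =>
      hdiam (f ⟨g, hg⟩) (fun hf => hgx (hf ▸ hx ⟨g, hg⟩)) _ (hx ⟨g, hg⟩) _ (hy ⟨g, hg⟩)
    exact (avgPullback_lt_of_visitCount_le hs hM hbd hε hρ hvisit).trans_le hδ
  simpa only [Fintype.card_fun, Fintype.card_fin, Fintype.card_coe] using
    of_fintype hB₀ hB hcoverB hνB₀ hdiamB

end IsEntCover

section Entropy

variable {X : Type*} [MeasurableSpace X] {μ : Measure X} {ρ : X → X → ℝ} {ε : ℝ} {k : ℕ}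

lemma epsEntropy_le_logb (hk : 0 < k) (h : IsEntCover μ ρ ε k) :
    epsEntropy μ ρ ε ≤ Real.logb 2 k := by
  have hmem : k ∈ {k : ℕ | 0 < k ∧ IsEntCover μ ρ ε k} := ⟨hk, h⟩
  exact Real.logb_le_logb_of_le one_lt_two (Nat.cast_pos.2 (Nat.sInf_mem ⟨k, hmem⟩).1)
    (Nat.cast_le.2 (Nat.sInf_le hmem))

-- If there is no cover at all then `epsEntropy` is `logb 2 (sInf ∅) = logb 2 0 = 0`.
lemma exists_isEntCover_of_epsEntropy_pos (hpos : 0 < epsEntropy μ ρ ε) :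
    ∃ k : ℕ, 2 ≤ k ∧ IsEntCover μ ρ ε k ∧ epsEntropy μ ρ ε = Real.logb 2 k := by
  have htwo : 2 ≤ sInf {k : ℕ | 0 < k ∧ IsEntCover μ ρ ε k} := by
    contrapose! hpos
    rw [epsEntropy]
    interval_cases sInf {k : ℕ | 0 < k ∧ IsEntCover μ ρ ε k} <;> simp
  have hmem := Nat.sInf_mem (Nat.nonempty_of_pos_sInf (two_pos.trans_le htwo))
  exact ⟨_, htwo, hmem.2, rfl⟩

end Entropy

lemma logb_add_one_pow_le {b x : ℝ} (hb : 1 < b) (hx : 2 ≤ x) (n : ℕ) :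
    Real.logb b ((x + 1) ^ n) ≤ 2 * n * Real.logb b x := by
  have hsq : x + 1 ≤ x ^ 2 := by nlinarith
  calc Real.logb b ((x + 1) ^ n) ≤ Real.logb b ((x ^ 2) ^ n) :=
        Real.logb_le_logb_of_le hb (by positivity) (by gcongr)
    _ = 2 * n * Real.logb b x := by
        rw [← pow_mul, Real.logb_pow, Nat.cast_mul, Nat.cast_two]

theorem epsEntropy_avg_le_card_mul_general {ι X Y : Type*} [MeasurableSpace X] [MeasurableSpace Y]
    {μ : Measure X} {ν : Measure Y} {T : ι → Y → X} {s : Finset ι} (hs : s.Nonempty)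
    (hT : ∀ g ∈ s, MeasurePreserving (T g) ν μ) {ρ : X → X → ℝ} {M : ℝ} (hM : 0 ≤ M)
    (hbd : ∀ x y, ρ x y ≤ M) {ε t δ : ℝ} (ht : 0 < t) (hεδ : ε ≤ t * δ) (hδ : ε + M * t ≤ δ)
    (hpos : 0 < epsEntropy μ ρ ε) :
    epsEntropy ν (avgPullback T s ρ) δ ≤ 2 * s.card * epsEntropy μ ρ ε := by
  obtain ⟨k, hk, hcover, hentropy⟩ := exists_isEntCover_of_epsEntropy_pos hpos
  calc epsEntropy ν (avgPullback T s ρ) δ ≤ Real.logb 2 ((k + 1) ^ s.card : ℕ) :=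
        epsEntropy_le_logb (by positivity) (hcover.average hs hT hM hbd ht hεδ hδ)
    _ = Real.logb 2 (((k : ℝ) + 1) ^ s.card) := by push_cast; rfl
    _ ≤ 2 * s.card * Real.logb 2 k :=
        logb_add_one_pow_le one_lt_two (Nat.ofNat_le_cast.2 hk) s.card
    _ = 2 * s.card * epsEntropy μ ρ ε := by rw [hentropy]

/-- For a measure-preserving action and an admissible semimetric `ρ ≤ 1` with
`ℍ_ε(ρ) > 0`, `ℍ_{2√ε}(Gⁿ_av ρ) ≤ 2 |Fₙ| · ℍ_ε(ρ)` for every `n`. -/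
theorem epsEntropy_avg_le_card_mul {G X : Type*} [Group G] [DecidableEq G]
    [MeasurableSpace X] [MulAction G X]
    (μ : Measure X) [IsProbabilityMeasure μ]
    (hmp : ∀ g : G, MeasurePreserving (fun x : X => g • x) μ μ)
    (F : ℕ → Finset G) (hne : ∀ n, (F n).Nonempty)
    (hFolner : ∀ g : G,
      Tendsto (fun n => ((symmDiff (g • F n) (F n)).card : ℝ) / (F n).card) atTop (nhds 0))
    (ρ : X → X → ℝ)
    (hnonneg : ∀ x y, 0 ≤ ρ x y) (hsymm : ∀ x y, ρ x y = ρ y x)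
    (htri : ∀ x y z, ρ x z ≤ ρ x y + ρ y z) (hbd : ∀ x y, ρ x y ≤ 1)
    (hadm : Admissible μ ρ)
    (ε : ℝ) (hε0 : 0 < ε) (hε1 : ε < 1) (hpos : 0 < epsEntropy μ ρ ε) (n : ℕ) :
    epsEntropy μ
        (fun x y => ((F n).card : ℝ)⁻¹ * ∑ g ∈ F n, ρ (g • x) (g • y))
        (2 * Real.sqrt ε)
      ≤ 2 * (F n).card * epsEntropy μ ρ ε := by
  have hle : ε ≤ √ε := Real.le_sqrt_of_sq_le (by nlinarith)
  exact epsEntropy_avg_le_card_mul_general (hne n) (fun g _ => hmp g) zero_le_one hbd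
    (Real.sqrt_pos.2 hε0) (by linarith [Real.mul_self_sqrt hε0.le]) (by linarith) hpos
end

section
/- Let G be a countable amenable group acting by measure-preserving transformations on a probability space (X, μ) with Følner sequence {F_n}, and suppose h(X, μ, G) > 0. Then there exists a finite measurable partition ξ and ε₀ > 0 such that for all ε ∈ (0, ε₀), ℍ_ε(X, μ, G^n_{av} ρ_ξ) ≳ |F_n| (i.e., there is c > 0 with ℍ_ε(X, μ, G^n_{av}ρ_ξ) ≥ c|F_n| for all n). -/
open MeasureTheory Filter Pointwise

/-!
A partition of finite entropy is approximated by a finite partition `P` that loses less entropy per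
translate than the given entropy rate, so the names of `P` along `F n` still have entropy
`≥ b * |F n|`; for the finitely many exceptional `n` this follows from `H(P) > 0`. On the other
hand, `G^n_av ρ_P` is the normalised Hamming distance between these names. Given an optimal
`ε`-cover, a name can be described by the centre of a piece of the cover near it and the list of
letters where it differs from that centre, which on average are at most `2ε |F n|` many. Hence the
names have entropy at most `ℍ_ε + |F n| * o(1)` as `ε → 0`, and `ℍ_ε ≥ (b / 2) |F n|` for small `ε`.
-/

open scoped ENNReal Topology

section Information

variable {X ι κ : Type*} [MeasurableSpace X] {μ : Measure X}

/-- The information function of the partition of `X` into the fibres of `N`. -/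
noncomputable def information (μ : Measure X) (N : X → ι) (x : X) : ℝ :=
  -Real.logb 2 (μ.real (N ⁻¹' {N x}))

/-- The Shannon entropy, in bits, of the partition of `X` into the fibres of `N`. It is the junk
value `0` when the information function is not integrable. -/
noncomputable def partitionEntropy (μ : Measure X) (N : X → ι) : ℝ :=
  ∫ x, information μ N x ∂μ

theorem information_nonneg [IsProbabilityMeasure μ] (N : X → ι) (x : X) :
    0 ≤ information μ N x :=
  neg_nonneg.2 (Real.logb_nonpos one_lt_two measureReal_nonneg measureReal_le_one)

theorem partitionEntropy_of_subsingleton [IsProbabilityMeasure μ] [Subsingleton ι] (N : X → ι) :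
    partitionEntropy μ N = 0 := by
  have hfiber (x : X) : N ⁻¹' {N x} = Set.univ :=
    Set.eq_univ_of_forall fun y => Subsingleton.elim (N y) (N x)
  simp [partitionEntropy, information, hfiber]

theorem measurable_information_comp [Countable ι] [MeasurableSpace ι] [MeasurableSingletonClass ι]
    {N : X → ι} (hN : Measurable N) (f : ι → κ) : Measurable (information μ (f ∘ N)) :=
  (measurable_of_countable fun i => -Real.logb 2 (μ.real (f ∘ N ⁻¹' {f i}))).comp hN

theorem integrable_comp_of_finite [IsFiniteMeasure μ] [Finite ι] [MeasurableSpace ι]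
    [MeasurableSingletonClass ι] {N : X → ι} (hN : Measurable N) (f : ι → ℝ) :
    Integrable (fun x => f (N x)) μ :=
  (Integrable.of_finite (μ := μ.map N) (f := f)).comp_measurable hN

theorem integrable_information_of_finite [IsFiniteMeasure μ] [Finite ι] [MeasurableSpace ι]
    [MeasurableSingletonClass ι] {N : X → ι} (hN : Measurable N) :
    Integrable (information μ N) μ :=
  integrable_comp_of_finite hN fun i => -Real.logb 2 (μ.real (N ⁻¹' {i}))

theorem ae_measure_fiber_ne_zero [Countable ι] (μ : Measure X) (N : X → ι) :
    ∀ᵐ x ∂μ, μ (N ⁻¹' {N x}) ≠ 0 := by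
  have hnull : ∀ᵐ x ∂μ, ∀ i, μ (N ⁻¹' {i}) = 0 → N x ≠ i :=
    ae_all_iff.2 fun i => by
      by_cases hi : μ (N ⁻¹' {i}) = 0
      · filter_upwards [measure_eq_zero_iff_ae_notMem.1 hi] with x hx _ using hx
      · exact ae_of_all _ fun x h => absurd h hi
  filter_upwards [hnull] with x hx h0 using hx _ h0 rfl

theorem information_comp_le [IsFiniteMeasure μ] [Countable ι] (N : X → ι) (f : ι → κ) :
    ∀ᵐ x ∂μ, information μ (f ∘ N) x ≤ information μ N x := by
  filter_upwards [ae_measure_fiber_ne_zero μ N] with x hx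
  have hfiber : N ⁻¹' {N x} ⊆ f ∘ N ⁻¹' {(f ∘ N) x} := fun y hy => congrArg f hy
  exact neg_le_neg (Real.logb_le_logb_of_le one_lt_two
    (ENNReal.toReal_pos hx (measure_ne_top _ _)) (measureReal_mono hfiber))

theorem partitionEntropy_comp_le [IsProbabilityMeasure μ] [Countable ι] {N : X → ι}
    (hN : Integrable (information μ N) μ) (f : ι → κ) :
    partitionEntropy μ (f ∘ N) ≤ partitionEntropy μ N :=
  integral_mono_of_nonneg (ae_of_all _ (information_nonneg _)) hN (information_comp_le N f)

theorem integrable_information_comp [IsProbabilityMeasure μ] [Countable ι] [MeasurableSpace ι]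
    [MeasurableSingletonClass ι] {N : X → ι} (hN : Measurable N)
    (hint : Integrable (information μ N) μ) (f : ι → κ) :
    Integrable (information μ (f ∘ N)) μ :=
  hint.mono' (measurable_information_comp hN f).aestronglyMeasurable <| by
    filter_upwards [information_comp_le N f] with x hx
    rwa [Real.norm_of_nonneg (information_nonneg _ x)]

section MeasurePreserving

variable {Y : Type*} [MeasurableSpace Y] {ν : Measure Y} {T : X → Y} [MeasurableSpace ι]
  [MeasurableSingletonClass ι] {N : Y → ι}

theorem information_comp_measurePreserving (hT : MeasurePreserving T μ ν) (hN : Measurable N) :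
    information μ (N ∘ T) = information ν N ∘ T := by
  funext x
  have hfiber : μ (N ∘ T ⁻¹' {N (T x)}) = ν (N ⁻¹' {N (T x)}) :=
    hT.measure_preimage (hN (measurableSet_singleton _)).nullMeasurableSet
  simp only [information, Function.comp_apply, measureReal_def, hfiber]

theorem partitionEntropy_comp_measurePreserving [Countable ι] (hT : MeasurePreserving T μ ν)
    (hN : Measurable N) : partitionEntropy μ (N ∘ T) = partitionEntropy ν N := by
  have hmeas : Measurable (information ν N) := measurable_information_comp hN id
  calc ∫ x, information μ (N ∘ T) x ∂μ = ∫ x, information ν N (T x) ∂μ := by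
        simp only [information_comp_measurePreserving hT hN, Function.comp_apply]
    _ = ∫ y, information ν N y ∂μ.map T :=
        (integral_map hT.measurable.aemeasurable hmeas.aestronglyMeasurable).symm
    _ = ∫ y, information ν N y ∂ν := by rw [hT.map_eq]

end MeasurePreserving

theorem tendsto_partitionEntropy_clamp [IsProbabilityMeasure μ] {Q : X → ℕ} (hQ : Measurable Q)
    (hint : Integrable (information μ Q) μ) :
    Tendsto (fun M => partitionEntropy μ ((Fin.clamp · M) ∘ Q)) atTop
      (𝓝 (partitionEntropy μ Q)) := by
  refine tendsto_integral_of_dominated_convergence (information μ Q)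
    (fun M => (measurable_information_comp hQ _).aestronglyMeasurable) hint (fun M => ?_)
    (ae_of_all _ fun x => tendsto_const_nhds.congr' ?_)
  · filter_upwards [information_comp_le Q (Fin.clamp · M)] with x hx
    rwa [Real.norm_of_nonneg (information_nonneg _ x)]
  · filter_upwards [eventually_gt_atTop (Q x)] with M hM
    have hfiber : (Fin.clamp · M) ∘ Q ⁻¹' {Fin.clamp (Q x) M} = Q ⁻¹' {Q x} := by
      ext y
      simp only [Set.mem_preimage, Function.comp_apply, Set.mem_singleton_iff, Fin.ext_iff,
        Fin.coe_clamp]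
      omega
    simp only [information, Function.comp_apply, hfiber]

theorem lintegral_div_measure_fiber_le [Countable ι] [MeasurableSpace ι]
    [MeasurableSingletonClass ι] {N : X → ι} (hN : Measurable N) (w : ι → ℝ≥0∞) :
    ∫⁻ x, w (N x) / μ (N ⁻¹' {N x}) ∂μ ≤ ∑' i, w i := by
  rw [← lintegral_map (f := fun i => w i / μ (N ⁻¹' {i})) (measurable_of_countable _) hN,
    lintegral_countable']
  refine ENNReal.tsum_le_tsum fun i => ?_
  rw [Measure.map_apply hN (measurableSet_singleton i)]
  exact ENNReal.mul_le_of_le_div le_rfl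

theorem information_le_neg_logb_add [IsFiniteMeasure μ] {N : X → ι} {x : X}
    (hx : μ (N ⁻¹' {N x}) ≠ 0) {t : ℝ≥0∞} (ht : t ≠ 0) (ht_top : t ≠ ∞) :
    information μ N x
      ≤ -Real.logb 2 t.toReal + ((t / μ (N ⁻¹' {N x})).toReal - 1) / Real.log 2 := by
  have ht_pos : 0 < t.toReal := ENNReal.toReal_pos ht ht_top
  have hμ_pos : 0 < (μ (N ⁻¹' {N x})).toReal := ENNReal.toReal_pos hx (measure_ne_top _ _)
  have hlog_ratio := div_le_div_of_nonneg_right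
    (Real.log_le_sub_one_of_pos (div_pos ht_pos hμ_pos)) (Real.log_pos one_lt_two).le
  rw [Real.log_div ht_pos.ne' hμ_pos.ne', sub_div] at hlog_ratio
  rw [information, measureReal_def, ENNReal.toReal_div, Real.logb, Real.logb]
  linarith

/-- Gibbs' inequality, from `log s ≤ s - 1` applied to the likelihood ratio of `w` and the
distribution of `N`. -/
theorem partitionEntropy_le_integral_neg_logb [IsProbabilityMeasure μ] [Countable ι]
    [MeasurableSpace ι] [MeasurableSingletonClass ι] {N : X → ι} (hN : Measurable N)
    {w : ι → ℝ≥0∞} (hw : ∑' i, w i ≤ 1) (hw₀ : ∀ᵐ x ∂μ, w (N x) ≠ 0)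
    (hint : Integrable (fun x => -Real.logb 2 (w (N x)).toReal) μ) :
    partitionEntropy μ N ≤ ∫ x, -Real.logb 2 (w (N x)).toReal ∂μ := by
  let ratio : X → ℝ≥0∞ := fun x => w (N x) / μ (N ⁻¹' {N x})
  have hratio_meas : AEMeasurable ratio μ :=
    ((measurable_of_countable fun i => w i / μ (N ⁻¹' {i})).comp hN).aemeasurable
  have hratio : ∫⁻ x, ratio x ∂μ ≤ 1 := (lintegral_div_measure_fiber_le hN w).trans hw
  have hratio_ne_top : ∫⁻ x, ratio x ∂μ ≠ ∞ := ne_top_of_le_ne_top ENNReal.one_ne_top hratio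
  have hratio_int := integrable_toReal_of_lintegral_ne_top hratio_meas hratio_ne_top
  have hratio_real : ∫ x, (ratio x).toReal ∂μ ≤ 1 := by
    rw [integral_toReal hratio_meas (ae_lt_top' hratio_meas hratio_ne_top)]
    exact ENNReal.toReal_mono ENNReal.one_ne_top hratio
  have hw_ne_top (i : ι) : w i ≠ ∞ :=
    ne_top_of_le_ne_top ENNReal.one_ne_top ((ENNReal.le_tsum i).trans hw)
  have hcorrection_int : Integrable (fun x => ((ratio x).toReal - 1) / Real.log 2) μ :=
    (hratio_int.sub (integrable_const 1)).div_const _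
  calc partitionEntropy μ N
      ≤ ∫ x, (-Real.logb 2 (w (N x)).toReal + ((ratio x).toReal - 1) / Real.log 2) ∂μ :=
        integral_mono_of_nonneg (ae_of_all _ (information_nonneg N)) (hint.add hcorrection_int)
          (by filter_upwards [hw₀, ae_measure_fiber_ne_zero μ N] with x hwx hx using
            information_le_neg_logb_add hx hwx (hw_ne_top _))
    _ = ∫ x, -Real.logb 2 (w (N x)).toReal ∂μ
        + (∫ x, (ratio x).toReal ∂μ - 1) / Real.log 2 := by
        rw [integral_add hint hcorrection_int, integral_div,
          integral_sub hratio_int (integrable_const 1)]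
        simp
    _ ≤ ∫ x, -Real.logb 2 (w (N x)).toReal ∂μ :=
        add_le_of_nonpos_right
          (div_nonpos_of_nonpos_of_nonneg (sub_nonpos.2 hratio_real)
            (Real.log_pos one_lt_two).le)

end Information

section Subadditivity

theorem tsum_pi_prod_le_one {κ ι : Type*} [Fintype κ] (u : κ → ι → ℝ≥0∞)
    (hu : ∀ g, ∑' j, u g j ≤ 1) : ∑' q : κ → ι, ∏ g, u g (q g) ≤ 1 := by
  classical
  rw [ENNReal.tsum_eq_iSup_sum]
  refine iSup_le fun s => ?_
  calc ∑ q ∈ s, ∏ g, u g (q g)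
      ≤ ∑ q ∈ Fintype.piFinset fun g => s.image fun q => q g, ∏ g, u g (q g) :=
        Finset.sum_le_sum_of_subset fun q hq =>
          Fintype.mem_piFinset.2 fun g => Finset.mem_image_of_mem _ hq
    _ = ∏ g, ∑ j ∈ s.image fun q => q g, u g j := (Finset.prod_univ_sum _ _).symm
    _ ≤ 1 := Finset.prod_le_one' fun g _ => (ENNReal.sum_le_tsum _).trans (hu g)

theorem tsum_mul_prod_le_one {κ ι A : Type*} [Fintype κ] (f : ι → A) {W : (κ → A) → ℝ≥0∞}
    (hW : ∑' r, W r ≤ 1) {v : κ → ι → ℝ≥0∞}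
    (hv : ∀ g a, ∑' j, (f ⁻¹' {a}).indicator (v g) j ≤ 1) :
    ∑' q : κ → ι, W (f ∘ q) * ∏ g, v g (q g) ≤ 1 := by
  classical
  calc ∑' q : κ → ι, W (f ∘ q) * ∏ g, v g (q g)
      ≤ ∑' q : κ → ι, ∑' r, W r * ∏ g, (f ⁻¹' {r g}).indicator (v g) (q g) :=
        ENNReal.tsum_le_tsum fun q => by
          refine le_of_eq_of_le ?_ (ENNReal.le_tsum (f ∘ q))
          simp
    _ = ∑' r, W r * ∑' q : κ → ι, ∏ g, (f ⁻¹' {r g}).indicator (v g) (q g) := by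
        rw [ENNReal.tsum_comm]
        simp only [ENNReal.tsum_mul_left]
    _ ≤ ∑' r, W r := ENNReal.tsum_le_tsum fun r =>
        mul_le_of_le_one_right' (tsum_pi_prod_le_one _ fun g => hv g (r g))
    _ ≤ 1 := hW

variable {X κ ι A : Type*} [MeasurableSpace X] {μ : Measure X}

theorem tsum_measure_fiber [Countable ι] [MeasurableSpace ι] [MeasurableSingletonClass ι]
    {N : X → ι} (hN : Measurable N) : ∑' i, μ (N ⁻¹' {i}) = μ Set.univ := by
  rw [← Set.preimage_univ (f := N), ← tsum_measure_preimage_singleton Set.countable_univ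
    fun i _ => hN (measurableSet_singleton i), tsum_univ fun i => μ (N ⁻¹' {i})]

/-- The conditional probability that `N` takes the value `j`, given that `f ∘ N` takes the value
`f j`; it is `0` if that event is null. -/
noncomputable def condFiberProb (μ : Measure X) (N : X → ι) (f : ι → A) (j : ι) : ℝ≥0∞ :=
  μ (N ⁻¹' {j}) / μ (f ∘ N ⁻¹' {f j})

theorem tsum_indicator_condFiberProb_le_one [Countable ι] [MeasurableSpace ι]
    [MeasurableSingletonClass ι] {N : X → ι} (hN : Measurable N) (f : ι → A) (a : A) :
    ∑' j, (f ⁻¹' {a}).indicator (condFiberProb μ N f) j ≤ 1 := by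
  rw [← tsum_subtype]
  calc ∑' j : f ⁻¹' {a}, condFiberProb μ N f j
      = ∑' j : f ⁻¹' {a}, μ (N ⁻¹' {(j : ι)}) / μ (f ∘ N ⁻¹' {a}) :=
        tsum_congr fun j => by rw [condFiberProb, j.2]
    _ = (∑' j : f ⁻¹' {a}, μ (N ⁻¹' {(j : ι)})) / μ (f ∘ N ⁻¹' {a}) := by
        simp only [div_eq_mul_inv, ENNReal.tsum_mul_right]
    _ = μ (f ∘ N ⁻¹' {a}) / μ (f ∘ N ⁻¹' {a}) := by
        rw [tsum_measure_preimage_singleton (Set.to_countable _)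
          fun j _ => hN (measurableSet_singleton j), ← Set.preimage_comp]
    _ ≤ 1 := ENNReal.div_self_le_one

theorem condFiberProb_toReal_ne_zero [IsFiniteMeasure μ] {N : X → ι} (f : ι → A) {j : ι}
    (hj : μ (N ⁻¹' {j}) ≠ 0) : (condFiberProb μ N f j).toReal ≠ 0 := by
  have hfiber : N ⁻¹' {j} ⊆ f ∘ N ⁻¹' {f j} := fun y hy => congrArg f hy
  exact ENNReal.toReal_ne_zero.2 ⟨ENNReal.div_ne_zero.2 ⟨hj, measure_ne_top _ _⟩,
    ENNReal.div_ne_top (measure_ne_top _ _) fun h => hj (measure_mono_null hfiber h)⟩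

theorem neg_logb_condFiberProb [IsFiniteMeasure μ] {N : X → ι} (f : ι → A) {x : X}
    (hx : μ (N ⁻¹' {N x}) ≠ 0) :
    -Real.logb 2 (condFiberProb μ N f (N x)).toReal
      = information μ N x - information μ (fun y => f (N y)) x := by
  have hne := condFiberProb_toReal_ne_zero f hx
  rw [condFiberProb, ENNReal.toReal_div] at hne ⊢
  obtain ⟨hnum, hden⟩ := div_ne_zero_iff.1 hne
  rw [Real.logb_div hnum hden, neg_sub']
  simp only [information, measureReal_def, Function.comp_def]

theorem neg_logb_mul_prod_condFiberProb [IsFiniteMeasure μ] [Fintype κ] {N : X → κ → ι}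
    (f : ι → A) {x : X} (hfx : μ ((fun y => f ∘ N y) ⁻¹' {f ∘ N x}) ≠ 0)
    (hx : ∀ g, μ ((N · g) ⁻¹' {N x g}) ≠ 0) :
    -Real.logb 2 (μ ((fun y => f ∘ N y) ⁻¹' {f ∘ N x})
        * ∏ g, condFiberProb μ (N · g) f (N x g)).toReal
      = information μ (fun y => f ∘ N y) x
        + ∑ g, (information μ (N · g) x - information μ (fun y => f (N y g)) x) := by
  have hne (g : κ) := condFiberProb_toReal_ne_zero f (hx g)
  have hne_prod := Finset.prod_ne_zero_iff.2 fun g (_ : g ∈ Finset.univ) => hne g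
  rw [ENNReal.toReal_mul, ENNReal.toReal_prod,
    Real.logb_mul (ENNReal.toReal_ne_zero.2 ⟨hfx, measure_ne_top _ _⟩) hne_prod,
    Real.logb_prod _ _ fun g _ => hne g, neg_add, ← Finset.sum_neg_distrib]
  exact congrArg₂ (· + ·) rfl
    (Finset.sum_congr rfl fun g _ => neg_logb_condFiberProb (N := (N · g)) f (hx g))

/-- Each coordinate is encoded conditionally on its image under `f`; this is the inequality
`H(⋁ ξ_g | ⋁ η_g) ≤ ∑ H(ξ_g | η_g)` for partitions `η_g` coarser than `ξ_g`. -/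
theorem partitionEntropy_pi_le [IsProbabilityMeasure μ] [Fintype κ] [Countable ι]
    [MeasurableSpace ι] [MeasurableSingletonClass ι] [Finite A] {N : X → κ → ι}
    (hN : Measurable N) (hint : ∀ g, Integrable (information μ (N · g)) μ) (f : ι → A) :
    partitionEntropy μ N ≤ partitionEntropy μ (fun x => f ∘ N x)
      + ∑ g, (partitionEntropy μ (N · g) - partitionEntropy μ (fun x => f (N x g))) := by
  let _ : MeasurableSpace A := ⊤
  have hfN : Measurable (fun x => f ∘ N x) :=
    (measurable_of_countable fun q : κ → ι => f ∘ q).comp hN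
  have hfN_int := integrable_information_of_finite (μ := μ) hfN
  have hfg_int (g : κ) : Integrable (information μ fun x => f (N x g)) μ :=
    integrable_information_comp hN.eval (hint g) f
  have hgap_int (g : κ) : Integrable (fun x =>
      information μ (N · g) x - information μ (fun y => f (N y g)) x) μ :=
    (hint g).sub (hfg_int g)
  have hgaps_int := integrable_finsetSum Finset.univ fun g _ => hgap_int g
  let w : (κ → ι) → ℝ≥0∞ := fun q =>
    μ ((fun x => f ∘ N x) ⁻¹' {f ∘ q}) * ∏ g, condFiberProb μ (N · g) f (q g)
  have hw : ∑' q, w q ≤ 1 :=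
    tsum_mul_prod_le_one f (W := fun r => μ ((fun x => f ∘ N x) ⁻¹' {r}))
      ((tsum_measure_fiber hfN).trans measure_univ).le
      fun g a => tsum_indicator_condFiberProb_le_one hN.eval f a
  have hfiber : ∀ᵐ x ∂μ, μ ((fun y => f ∘ N y) ⁻¹' {f ∘ N x}) ≠ 0 ∧
      ∀ g, μ ((N · g) ⁻¹' {N x g}) ≠ 0 :=
    (ae_measure_fiber_ne_zero μ _).and
      (ae_all_iff.2 fun g => ae_measure_fiber_ne_zero μ (N · g))
  have hw_ne_zero : ∀ᵐ x ∂μ, w (N x) ≠ 0 := hfiber.mono fun x ⟨hfx, hx⟩ =>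
    mul_ne_zero hfx (Finset.prod_ne_zero_iff.2 fun g _ h =>
      condFiberProb_toReal_ne_zero f (hx g) (h ▸ ENNReal.toReal_zero))
  have hcode := hfiber.mono fun x ⟨hfx, hx⟩ => neg_logb_mul_prod_condFiberProb f hfx hx
  calc partitionEntropy μ N
      ≤ ∫ x, -Real.logb 2 (w (N x)).toReal ∂μ :=
        partitionEntropy_le_integral_neg_logb hN hw hw_ne_zero
          ((hfN_int.add hgaps_int).congr (hcode.mono fun _ => Eq.symm))
    _ = partitionEntropy μ (fun x => f ∘ N x) + ∫ x, ∑ g,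
          (information μ (N · g) x - information μ (fun y => f (N y g)) x) ∂μ :=
        (integral_congr_ae hcode).trans (integral_add hfN_int hgaps_int)
    _ = partitionEntropy μ (fun x => f ∘ N x)
          + ∑ g, (partitionEntropy μ (N · g) - partitionEntropy μ (fun x => f (N x g))) := by
        rw [integral_finsetSum _ fun g _ => hgap_int g]
        exact congrArg _ (Finset.sum_congr rfl fun g _ => integral_sub (hint g) (hfg_int g))

end Subadditivity

section HammingCode

variable {X κ A ι : Type*} [Fintype κ] [Fintype A] [DecidableEq A]

theorem sum_pow_hammingDist {R : Type*} [CommRing R] [DecidableEq κ] (r : R) (c : κ → A) :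
    ∑ q : κ → A, r ^ hammingDist q c = (1 + (Fintype.card A - 1) * r) ^ Fintype.card κ := by
  have hletter (g : κ) : ∑ a, (if a ≠ c g then r else 1) = 1 + (Fintype.card A - 1) * r := by
    rw [← Finset.add_sum_erase _ _ (Finset.mem_univ (c g)), if_neg (not_not.2 rfl),
      Finset.sum_congr rfl fun a ha => if_pos (Finset.ne_of_mem_erase ha), Finset.sum_const,
      nsmul_eq_mul, Finset.cast_card_erase_of_mem (Finset.mem_univ _), Finset.card_univ]
  calc ∑ q : κ → A, r ^ hammingDist q c
      = ∑ q : κ → A, ∏ g, (if q g ≠ c g then r else 1) := by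
        simp only [hammingDist, Finset.prod_ite, Finset.prod_const, one_pow, mul_one]
    _ = ∏ g, ∑ a, (if a ≠ c g then r else 1) :=
        (Fintype.prod_sum fun g a => if a ≠ c g then r else 1).symm
    _ = (1 + (Fintype.card A - 1) * r) ^ Fintype.card κ := by
        simp only [hletter, Finset.prod_const, Finset.card_univ]

theorem sum_pow_iInf_hammingDist_le [DecidableEq κ] [Fintype ι] [Nonempty ι] {r : ℝ} (hr : 0 ≤ r)
    (c : ι → κ → A) :
    ∑ q : κ → A, r ^ (⨅ j, hammingDist q (c j))
      ≤ Fintype.card ι * (1 + (Fintype.card A - 1) * r) ^ Fintype.card κ := by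
  calc ∑ q : κ → A, r ^ (⨅ j, hammingDist q (c j))
      ≤ ∑ q : κ → A, ∑ j, r ^ hammingDist q (c j) := Finset.sum_le_sum fun q _ => by
        obtain ⟨j, hj⟩ := Nat.sInf_mem (Set.range_nonempty fun j => hammingDist q (c j))
        rw [iInf, ← hj]
        exact Finset.single_le_sum (f := fun j => r ^ hammingDist q (c j))
          (fun _ _ => pow_nonneg hr _) (Finset.mem_univ j)
    _ = Fintype.card ι * (1 + (Fintype.card A - 1) * r) ^ Fintype.card κ := by
        rw [Finset.sum_comm]
        simp only [sum_pow_hammingDist, Finset.sum_const, Finset.card_univ, nsmul_eq_mul]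

/-- A word is encoded by the index of its nearest centre followed by its errors, an error costing
`-logb 2 r` bits. -/
theorem partitionEntropy_le_of_centers [MeasurableSpace X] {μ : Measure X}
    [IsProbabilityMeasure μ] [Nonempty A] [Fintype ι] [Nonempty ι] [MeasurableSpace A]
    [MeasurableSingletonClass A]
    {N : X → κ → A} (hN : Measurable N) (c : ι → κ → A) {r : ℝ} (hr : 0 < r) :
    partitionEntropy μ N ≤ Real.logb 2 (Fintype.card ι)
      + Fintype.card κ * Real.logb 2 (1 + (Fintype.card A - 1) * r)
      - (∫ x, ((⨅ j, hammingDist (N x) (c j) : ℕ) : ℝ) ∂μ) * Real.logb 2 r := by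
  classical
  have hcard : (1 : ℝ) ≤ Fintype.card A := by exact_mod_cast Fintype.card_pos
  have hι : (0 : ℝ) < Fintype.card ι := by exact_mod_cast Fintype.card_pos
  have hbase : 0 < 1 + (Fintype.card A - 1) * r := by nlinarith
  let B : ℝ := Fintype.card ι * (1 + (Fintype.card A - 1) * r) ^ Fintype.card κ
  have hB : 0 < B := mul_pos hι (pow_pos hbase _)
  let dist (q : κ → A) : ℕ := ⨅ j, hammingDist q (c j)
  let w (q : κ → A) : ℝ≥0∞ := ENNReal.ofReal (r ^ dist q / B)
  have hw_pos (q : κ → A) : 0 < r ^ dist q / B := by positivity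
  have hw : ∑' q, w q ≤ 1 := by
    rw [tsum_fintype, ← ENNReal.ofReal_sum_of_nonneg fun q _ => (hw_pos q).le, ← Finset.sum_div,
      ENNReal.ofReal_le_one]
    exact div_le_one_of_le₀ (sum_pow_iInf_hammingDist_le hr.le c) hB.le
  have hcode (q : κ → A) : -Real.logb 2 (w q).toReal = Real.logb 2 B - dist q * Real.logb 2 r := by
    rw [ENNReal.toReal_ofReal (hw_pos q).le, Real.logb_div (pow_pos hr _).ne' hB.ne',
      Real.logb_pow, neg_sub]
  calc partitionEntropy μ N
      ≤ ∫ x, -Real.logb 2 (w (N x)).toReal ∂μ :=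
        partitionEntropy_le_integral_neg_logb hN hw
          (ae_of_all _ fun x => (ENNReal.ofReal_pos.2 (hw_pos _)).ne')
          (integrable_comp_of_finite hN fun q => -Real.logb 2 (w q).toReal)
    _ = Real.logb 2 B - (∫ x, (dist (N x) : ℝ) ∂μ) * Real.logb 2 r := by
        simp only [hcode]
        rw [integral_sub (integrable_const _)
            (integrable_comp_of_finite hN fun q => (dist q : ℝ) * Real.logb 2 r),
          integral_mul_const, integral_const, probReal_univ, one_smul]
    _ = _ := by
        rw [Real.logb_mul hι.ne' (pow_pos hbase _).ne', Real.logb_pow]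

end HammingCode

section Covers

theorem Admissible.exists_isEntCover_epsEntropy_eq {X : Type*} [MeasurableSpace X]
    {μ : Measure X} {ρ : X → X → ℝ} (hρ : Admissible μ ρ) {ε : ℝ} (hε : 0 < ε) :
    ∃ k, 0 < k ∧ IsEntCover μ ρ ε k ∧ epsEntropy μ ρ ε = Real.logb 2 k :=
  have hmin := Nat.sInf_mem (hρ ε hε)
  ⟨_, hmin.1, hmin.2, rfl⟩

theorem admissible_of_eq_zero_on_fibers {X B : Type*} [MeasurableSpace X] [Finite B] [Nonempty B]
    [MeasurableSpace B] [MeasurableSingletonClass B] (μ : Measure X) {N : X → B}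
    (hN : Measurable N) {ρ : X → X → ℝ} (hρ : ∀ x y, N x = N y → ρ x y = 0) : Admissible μ ρ := by
  intro ε hε
  have e := Finite.equivFin B
  refine ⟨Nat.card B, Nat.card_pos, Fin.cons ∅ fun j => N ⁻¹' {e.symm j},
    Fin.cases .empty fun j => hN (measurableSet_singleton _), ?_, by simpa using hε, ?_⟩
  · refine Set.eq_univ_of_forall fun x => Set.mem_iUnion.2 ⟨(e (N x)).succ, ?_⟩
    simp only [Fin.cons_succ, Equiv.symm_apply_apply, Set.mem_preimage, Set.mem_singleton_iff]
  · refine Fin.cases (fun h => absurd rfl h) fun j _ x hx y hy => ?_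
    rw [Fin.cons_succ] at hx hy
    exact (hρ x y (hx.trans hy.symm)).trans_lt hε

variable {X κ A : Type*} [Fintype κ] [DecidableEq A]

/-- The semimetric on `X` induced by the word-valued map `N` from the normalised Hamming distance;
it is `0` for words of length `0`. -/
noncomputable def hammingSemimetric (N : X → κ → A) (x y : X) : ℝ :=
  hammingDist (N x) (N y) / Fintype.card κ

/-- The cost in bits per letter of correcting a fraction `2 * ε` of errors in words over an alphabet
of `m` letters, when every error is given the weight `ε`. -/
noncomputable def codingRate (m : ℕ) (ε : ℝ) : ℝ :=
  Real.logb 2 (1 + (m - 1) * ε) - 2 * ε * Real.logb 2 ε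

theorem tendsto_codingRate (m : ℕ) : Tendsto (codingRate m) (𝓝[>] 0) (𝓝 0) := by
  have hlog : ContinuousAt (fun ε : ℝ => Real.log (1 + (m - 1) * ε)) 0 :=
    ContinuousAt.log (by fun_prop) (by simp)
  have hcont : ContinuousAt
      (fun ε : ℝ => (Real.log (1 + (m - 1) * ε) - 2 * (ε * Real.log ε)) / Real.log 2) 0 :=
    (hlog.sub (Real.continuous_mul_log.const_mul 2).continuousAt).div_const _
  have hlim := hcont.tendsto.mono_left (nhdsWithin_le_nhds (s := Set.Ioi 0))
  simp only [mul_zero, add_zero, Real.log_one, zero_mul, sub_zero, zero_div] at hlim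
  refine hlim.congr fun ε => ?_
  simp only [codingRate, Real.logb]
  ring

variable [MeasurableSpace X] {μ : Measure X}

theorem IsEntCover.exists_centers [Nonempty A] {N : X → κ → A} {ε : ℝ} {k : ℕ}
    (h : IsEntCover μ (hammingSemimetric N) ε k) :
    ∃ E, MeasurableSet E ∧ μ E < ENNReal.ofReal ε ∧ ∃ c : Fin k → κ → A,
      ∀ x ∉ E, ∃ j, (hammingDist (N x) (c j) : ℝ) ≤ ε * Fintype.card κ := by
  obtain ⟨S, hS, hcover, hsmall, hdiam⟩ := h
  have hcenter (j : Fin k) : ∃ c : κ → A, ∀ x ∈ S j.succ,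
      (hammingDist (N x) c : ℝ) ≤ ε * Fintype.card κ := by
    rcases (S j.succ).eq_empty_or_nonempty with hempty | ⟨y, hy⟩
    · exact ⟨Classical.arbitrary _, by simp [hempty]⟩
    · refine ⟨N y, fun x hx => ?_⟩
      have hmul : hammingSemimetric N x y * Fintype.card κ = hammingDist (N x) (N y) :=
        div_mul_cancel_of_imp fun hκ => by
          exact_mod_cast Nat.le_zero.1 (hammingDist_le_card_fintype.trans_eq (by exact_mod_cast hκ))
      rw [← hmul]
      exact mul_le_mul_of_nonneg_right (hdiam _ (Fin.succ_ne_zero j) x hx y hy).le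
        (Nat.cast_nonneg _)
  choose c hc using hcenter
  refine ⟨S 0, hS 0, hsmall, c, fun x hx => ?_⟩
  obtain ⟨i, hi⟩ := Set.iUnion_eq_univ_iff.1 hcover x
  obtain ⟨j, rfl⟩ := Fin.exists_succ_eq.2 fun h0 : i = 0 => hx (h0 ▸ hi)
  exact ⟨j, hc j x hi⟩

theorem integral_iInf_hammingDist_le [IsProbabilityMeasure μ] {ι : Type*} [Nonempty ι]
    {N : X → κ → A} {c : ι → κ → A} {ε : ℝ} (hε : 0 ≤ ε) {E : Set X} (hE : MeasurableSet E)
    (hμE : μ E ≤ ENNReal.ofReal ε)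
    (hc : ∀ x ∉ E, ∃ j, (hammingDist (N x) (c j) : ℝ) ≤ ε * Fintype.card κ) :
    ∫ x, ((⨅ j, hammingDist (N x) (c j) : ℕ) : ℝ) ∂μ ≤ 2 * ε * Fintype.card κ := by
  have hiInf_le (x : X) (j : ι) :
      ((⨅ j, hammingDist (N x) (c j) : ℕ) : ℝ) ≤ hammingDist (N x) (c j) :=
    Nat.cast_le.2 (ciInf_le' _ j)
  have hpointwise (x : X) : ((⨅ j, hammingDist (N x) (c j) : ℕ) : ℝ)
      ≤ ε * Fintype.card κ + E.indicator (fun _ => (Fintype.card κ : ℝ)) x := by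
    by_cases hx : x ∈ E
    · obtain ⟨j⟩ := ‹Nonempty ι›
      rw [Set.indicator_of_mem hx]
      exact ((hiInf_le x j).trans (Nat.cast_le.2 hammingDist_le_card_fintype)).trans
        (le_add_of_nonneg_left (by positivity))
    · obtain ⟨j, hj⟩ := hc x hx
      rw [Set.indicator_of_notMem hx, add_zero]
      exact (hiInf_le x j).trans hj
  have hE_int : Integrable (E.indicator fun _ => (Fintype.card κ : ℝ)) μ :=
    (integrable_const _).indicator hE
  have hμE_real : μ.real E ≤ ε := ENNReal.toReal_le_of_le_ofReal hε hμE
  calc ∫ x, ((⨅ j, hammingDist (N x) (c j) : ℕ) : ℝ) ∂μ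
      ≤ ∫ x, (ε * Fintype.card κ + E.indicator (fun _ => (Fintype.card κ : ℝ)) x) ∂μ :=
        integral_mono_of_nonneg (ae_of_all _ fun _ => Nat.cast_nonneg _)
          ((integrable_const _).add hE_int) (ae_of_all _ hpointwise)
    _ = ε * Fintype.card κ + μ.real E * Fintype.card κ := by
        rw [integral_add (integrable_const _) hE_int, integral_indicator_const _ hE,
          integral_const, probReal_univ, one_smul, smul_eq_mul]
    _ ≤ ε * Fintype.card κ + ε * Fintype.card κ := by gcongr
    _ = 2 * ε * Fintype.card κ := by ring

variable [IsProbabilityMeasure μ] [Fintype A] [MeasurableSpace A] [MeasurableSingletonClass A]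

theorem partitionEntropy_le_of_isEntCover [Nonempty A] {N : X → κ → A} (hN : Measurable N) {ε : ℝ}
    (hε : 0 < ε) (hε₁ : ε ≤ 1) {k : ℕ} (hk : 0 < k)
    (hcov : IsEntCover μ (hammingSemimetric N) ε k) :
    partitionEntropy μ N
      ≤ Real.logb 2 k + Fintype.card κ * codingRate (Fintype.card A) ε := by
  have : Nonempty (Fin k) := ⟨⟨0, hk⟩⟩
  obtain ⟨E, hE, hμE, c, hc⟩ := hcov.exists_centers
  have hmean := integral_iInf_hammingDist_le hε.le hE hμE.le hc
  have hbound := partitionEntropy_le_of_centers (μ := μ) hN c hε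
  have hlog : Real.logb 2 ε ≤ 0 := Real.logb_nonpos one_lt_two hε.le hε₁
  have herrors := mul_le_mul_of_nonpos_right hmean hlog
  rw [Fintype.card_fin] at hbound
  simp only [codingRate]
  linarith

theorem partitionEntropy_le_epsEntropy_add [Nonempty A] {N : X → κ → A} (hN : Measurable N)
    {ε : ℝ} (hε : 0 < ε) (hε₁ : ε ≤ 1) :
    partitionEntropy μ N ≤ epsEntropy μ (hammingSemimetric N) ε
      + Fintype.card κ * codingRate (Fintype.card A) ε := by
  have hadm : Admissible μ (hammingSemimetric N) :=
    admissible_of_eq_zero_on_fibers μ hN fun x y h => by simp [hammingSemimetric, h]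
  obtain ⟨k, hk, hcov, heq⟩ := hadm.exists_isEntCover_epsEntropy_eq hε
  exact heq ▸ partitionEntropy_le_of_isEntCover hN hε hε₁ hk hcov

end Covers

section Dynamics

variable {G X ι : Type*}

/-- The word of the atoms visited by the orbit of `x` along `F`, where the atom of a point is its
value under `Q`. Its fibres form the join of the partitions `T g ⁻¹ Q` over `g ∈ F`. -/
def orbitName (T : G → X → X) (Q : X → ι) (F : Finset G) (x : X) (g : F) : ι :=
  Q (T g x)

/-- The average over `F` of the translated cut semimetrics of the partition into the fibres
of `P`. -/
noncomputable def avgCutSemimetric [DecidableEq ι] (T : G → X → X) (F : Finset G) (P : X → ι)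
    (x y : X) : ℝ :=
  (F.card : ℝ)⁻¹ * ∑ g ∈ F, if P (T g x) = P (T g y) then 0 else 1

theorem avgCutSemimetric_eq_hammingSemimetric [DecidableEq ι] (T : G → X → X) (F : Finset G)
    (P : X → ι) : avgCutSemimetric T F P = hammingSemimetric (orbitName T P F) := by
  funext x y
  have hcount : ∑ g ∈ F, (if P (T g x) = P (T g y) then (0 : ℝ) else 1)
      = hammingDist (orbitName T P F x) (orbitName T P F y) := by
    rw [hammingDist, Finset.card_filter, ← Finset.sum_coe_sort F]
    push_cast
    exact Finset.sum_congr rfl fun g _ => (ite_not _ _ _).symm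
  rw [avgCutSemimetric, hcount, hammingSemimetric, Fintype.card_coe, inv_mul_eq_div]

variable [MeasurableSpace X] {μ : Measure X} {T : G → X → X}

theorem partitionEntropy_orbitName (μ : Measure X) (T : G → X → X) (Q : X → ι) (F : Finset G) :
    partitionEntropy μ (orbitName T Q F)
      = -∫ x, Real.logb 2 (μ {y | ∀ g ∈ F, Q (T g y) = Q (T g x)}).toReal ∂μ := by
  have hfiber (x : X) : orbitName T Q F ⁻¹' {orbitName T Q F x}
      = {y | ∀ g ∈ F, Q (T g y) = Q (T g x)} := by
    ext y
    simp [orbitName, funext_iff]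
  simp only [partitionEntropy, information, hfiber, integral_neg, measureReal_def]

variable [MeasurableSpace ι] (hT : ∀ g, MeasurePreserving (T g) μ μ)

include hT

theorem measurable_orbitName {Q : X → ι} (hQ : Measurable Q) (F : Finset G) :
    Measurable (orbitName T Q F) :=
  measurable_pi_lambda _ fun g => hQ.comp (hT g).measurable

variable [MeasurableSingletonClass ι] [IsProbabilityMeasure μ]

theorem partitionEntropy_orbitName_le_comp [Countable ι] {A : Type*} [Finite A] {Q : X → ι}
    (hQ : Measurable Q) (hint : Integrable (information μ Q) μ) (f : ι → A) (F : Finset G) :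
    partitionEntropy μ (orbitName T Q F) ≤ partitionEntropy μ (orbitName T (f ∘ Q) F)
      + F.card * (partitionEntropy μ Q - partitionEntropy μ (f ∘ Q)) := by
  let _ : MeasurableSpace A := ⊤
  have hQ_int (g : F) : Integrable (information μ (Q ∘ T g)) μ := by
    rw [information_comp_measurePreserving (hT g) hQ]
    exact (hT g).integrable_comp_of_integrable hint
  have hgap (g : F) : partitionEntropy μ (orbitName T Q F · g)
        - partitionEntropy μ (fun x => f (orbitName T Q F x g))
      = partitionEntropy μ Q - partitionEntropy μ (f ∘ Q) :=
    congrArg₂ (· - ·) (partitionEntropy_comp_measurePreserving (hT g) hQ)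
      (partitionEntropy_comp_measurePreserving (hT g) ((measurable_of_countable f).comp hQ))
  have hpi := partitionEntropy_pi_le (measurable_orbitName hT hQ F) hQ_int f
  rw [Finset.sum_congr rfl fun g _ => hgap g, Finset.sum_const, nsmul_eq_mul, Finset.card_univ,
    Fintype.card_coe] at hpi
  exact hpi

theorem partitionEntropy_orbitName_le_card_mul [Countable ι] {Q : X → ι} (hQ : Measurable Q)
    (hint : Integrable (information μ Q) μ) (F : Finset G) :
    partitionEntropy μ (orbitName T Q F) ≤ F.card * partitionEntropy μ Q := by
  simpa only [partitionEntropy_of_subsingleton, zero_add, sub_zero] using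
    partitionEntropy_orbitName_le_comp hT hQ hint (fun _ => ()) F

theorem partitionEntropy_le_orbitName [Finite ι] {P : X → ι} (hP : Measurable P) {F : Finset G}
    (hF : F.Nonempty) : partitionEntropy μ P ≤ partitionEntropy μ (orbitName T P F) := by
  obtain ⟨g, hg⟩ := hF
  rw [← partitionEntropy_comp_measurePreserving (hT g) hP]
  exact partitionEntropy_comp_le (integrable_information_of_finite (measurable_orbitName hT hP F))
    fun q => q ⟨g, hg⟩

/-- Far out in `F` the lower bound is assumed; the finitely many remaining sets are covered
by `H(P) ≤ H(P^F)`, and `H(P) > 0` by subadditivity. -/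
theorem exists_forall_mul_card_le_partitionEntropy [Finite ι] {P : X → ι} (hP : Measurable P)
    {F : ℕ → Finset G} (hne : ∀ n, (F n).Nonempty) {a : ℝ} (ha : 0 < a)
    (hent : ∀ᶠ n in atTop, a * (F n).card ≤ partitionEntropy μ (orbitName T P (F n))) :
    ∃ b > 0, ∀ n, b * (F n).card ≤ partitionEntropy μ (orbitName T P (F n)) := by
  obtain ⟨n₀, hn₀⟩ := eventually_atTop.1 hent
  have hcard_pos (n : ℕ) : (0 : ℝ) < (F n).card := Nat.cast_pos.2 (hne n).card_pos
  have hP_pos : 0 < partitionEntropy μ P := by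
    have hsub := (hn₀ n₀ le_rfl).trans (partitionEntropy_orbitName_le_card_mul hT hP
      (integrable_information_of_finite hP) (F n₀))
    rw [mul_comm] at hsub
    exact ha.trans_le (le_of_mul_le_mul_left hsub (hcard_pos n₀))
  have hratio_pos (n : ℕ) : 0 < partitionEntropy μ (orbitName T P (F n)) / (F n).card :=
    div_pos (hP_pos.trans_le (partitionEntropy_le_orbitName hT hP (hne n))) (hcard_pos n)
  have hsmall : ∀ᶠ b in 𝓝[>] (0 : ℝ), ∀ n ∈ Set.Iio n₀,
      b ≤ partitionEntropy μ (orbitName T P (F n)) / (F n).card :=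
    (Set.finite_Iio n₀).eventually_all.2 fun n _ =>
      (eventually_le_nhds (hratio_pos n)).filter_mono nhdsWithin_le_nhds
  obtain ⟨b, hb, hba, hb_small⟩ := (eventually_mem_nhdsWithin.and
    (((eventually_le_nhds ha).filter_mono nhdsWithin_le_nhds).and hsmall)).exists
  refine ⟨b, hb, fun n => ?_⟩
  rcases lt_or_ge n n₀ with hn | hn
  · exact (le_div_iff₀ (hcard_pos n)).1 (hb_small n hn)
  · exact (mul_le_mul_of_nonneg_right hba (hcard_pos n).le).trans (hn₀ n hn)

end Dynamics

theorem epsEntropy_ge_card_of_pos_entropy_general {G X : Type*} [MeasurableSpace X]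
    (μ : Measure X) [IsProbabilityMeasure μ] {T : G → X → X}
    (hT : ∀ g, MeasurePreserving (T g) μ μ) (F : ℕ → Finset G) (hne : ∀ n, (F n).Nonempty)
    {Q : X → ℕ} (hQ : Measurable Q) (hint : Integrable (information μ Q) μ) {a : ℝ} (ha : 0 < a)
    (hent : ∀ᶠ n in atTop, a * (F n).card ≤ partitionEntropy μ (orbitName T Q (F n))) :
    ∃ (m : ℕ) (P : X → Fin m), Measurable P ∧ ∃ ε₀ > (0 : ℝ), ∃ c > (0 : ℝ),
      ∀ ε : ℝ, 0 < ε → ε < ε₀ → ∀ n,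
        c * (F n).card ≤ epsEntropy μ (avgCutSemimetric T (F n) P) ε := by
  obtain ⟨M, hM⟩ := ((tendsto_partitionEntropy_clamp hQ hint).eventually_const_lt
    (sub_lt_self _ (half_pos ha))).exists
  set P : X → Fin (M + 1) := (Fin.clamp · M) ∘ Q
  have hP : Measurable P := (measurable_of_countable _).comp hQ
  have hP_ent : ∀ᶠ n in atTop,
      a / 2 * (F n).card ≤ partitionEntropy μ (orbitName T P (F n)) := by
    filter_upwards [hent] with n hn
    have hloss : (F n).card * (partitionEntropy μ Q - partitionEntropy μ P)
        ≤ (F n).card * (a / 2) :=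
      mul_le_mul_of_nonneg_left (by linarith) (Nat.cast_nonneg _)
    have hcomp := partitionEntropy_orbitName_le_comp hT hQ hint (Fin.clamp · M) (F n)
    linarith
  obtain ⟨b, hb, hbP⟩ := exists_forall_mul_card_le_partitionEntropy hT hP hne (half_pos ha) hP_ent
  obtain ⟨ε₀, hε₀, hrate⟩ := mem_nhdsGT_iff_exists_Ioo_subset.1
    ((tendsto_codingRate (M + 1)).eventually_le_const (half_pos hb))
  refine ⟨M + 1, P, hP, min ε₀ 1, lt_min hε₀ one_pos, b / 2, half_pos hb,
    fun ε hε hε_lt n => ?_⟩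
  have hrate_le := mul_le_mul_of_nonneg_left (hrate ⟨hε, hε_lt.trans_le (min_le_left _ _)⟩)
    (Nat.cast_nonneg (α := ℝ) (F n).card)
  have hcode := partitionEntropy_le_epsEntropy_add (μ := μ) (measurable_orbitName hT hP (F n)) hε
    (hε_lt.le.trans (min_le_right _ _))
  rw [Fintype.card_coe, Fintype.card_fin] at hcode
  rw [avgCutSemimetric_eq_hammingSemimetric]
  linarith [hbP n]

/-- Theorem 3(1): if the amenable measure entropy is positive (some finite-entropy partition
has positive normalized entropy limit), then there are a finite measurable partition `ξ`
and `ε₀ > 0` such that for all `ε ∈ (0, ε₀)`, `ℍ_ε(X, μ, Gⁿ_av ρ_ξ) ≳ |Fₙ|`. -/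
theorem epsEntropy_ge_card_of_pos_entropy {G X : Type*} [Group G] [Countable G] [DecidableEq G]
    [MeasurableSpace X] [MulAction G X]
    (μ : Measure X) [IsProbabilityMeasure μ]
    (hmp : ∀ g : G, MeasurePreserving (fun x : X => g • x) μ μ)
    (F : ℕ → Finset G) (hne : ∀ n, (F n).Nonempty)
    (hFolner : ∀ g : G,
      Tendsto (fun n => ((symmDiff (g • F n) (F n)).card : ℝ) / (F n).card) atTop (nhds 0))
    -- positive amenable measure entropy:
    (hpos : ∃ (Q : X → ℕ) (a : ℝ), Measurable Q ∧
      Integrable (fun x => Real.logb 2 (μ (Q ⁻¹' {Q x})).toReal) μ ∧ 0 < a ∧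
      Tendsto (fun n =>
          (-∫ x, Real.logb 2 (μ {y | ∀ g ∈ F n, Q (g • y) = Q (g • x)}).toReal ∂μ)
            / (F n).card) atTop (nhds a)) :
    ∃ (m : ℕ) (P : X → Fin m), Measurable P ∧ ∃ ε₀ > (0 : ℝ), ∀ ε : ℝ, 0 < ε → ε < ε₀ →
      ∃ c > (0 : ℝ), ∀ n,
        c * (F n).card ≤
          epsEntropy μ
            (fun x y => ((F n).card : ℝ)⁻¹ *
              ∑ g ∈ F n, (if P (g • x) = P (g • y) then (0 : ℝ) else 1)) ε := by
  obtain ⟨Q, a, hQ, hint, ha, hlim⟩ := hpos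
  have hent : ∀ᶠ n in atTop,
      a / 2 * (F n).card ≤ partitionEntropy μ (orbitName (fun g x => g • x) Q (F n)) := by
    filter_upwards [hlim.eventually_const_le (half_lt_self ha)] with n hn
    rw [partitionEntropy_orbitName]
    exact (le_div_iff₀ (Nat.cast_pos.2 (hne n).card_pos)).1 hn
  obtain ⟨m, P, hP, ε₀, hε₀, c, hc, hbound⟩ :=
    epsEntropy_ge_card_of_pos_entropy_general μ hmp F hne hQ hint.neg (half_pos ha) hent
  exact ⟨m, P, hP, ε₀, hε₀, fun ε hε hε_lt => ⟨c, hc, hbound ε hε hε_lt⟩⟩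
end

section
/- Fix ε ∈ (0, 1/10) and φ > 1. Let (X_i, μ_i, ρ_i), i = 1,...,k, be probability spaces with admissible semimetrics, and s_i > 0 weights with s_i/φ < ℍ_{4ε}(X_i, μ_i, ρ_i) < s_i. Define the weighted average semimetric on the product X = ∏ X_i with product measure μ: ρ(x, y) = (Σ_i s_i)^{-1} Σ_i s_i ρ_i(x_i, y_i). Then ℍ_{ε⁴}(X, μ, ρ) ≥ (ε³/φ) Σ_{i=1}^k ℍ_{4ε}(X_i, μ_i, ρ_i) − k − 1. -/
open MeasureTheory Filter Pointwise

/-!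
Let `S = ∑ sᵢ`. If `n` sets of diameter `< 4ε` do not suffice to cover `Xᵢ`, a greedy choice of `n`
such sets leaves over a set `Yᵢ` of measure at least `3ε` on which every `ε`-ball has measure at
most `1 / n`. By a Markov bound, with probability at least `2ε` the coordinates `i` with `xᵢ ∈ Yᵢ`
have total weight at least `εS`. If such a point `x` lies within average distance `ε⁴` of a fixed
point `a`, then the coordinates with `xᵢ ∈ Yᵢ` and `ρᵢ(xᵢ, aᵢ) < ε` have total weight `W` at least
`(ε - ε³)S`. If `c sᵢ ≤ ℍ_{4ε}(Xᵢ)` for all `i`, each coordinate contributes a factor at most `2`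
to the mean of `2 ^ (c W)`, so this has probability at most `2 ^ (k - c (ε - ε³)S)`. Hence every set
of small diameter captures little of the event of probability `2ε`, and many such sets are needed.
-/

section Covers

variable {α : Type*} [MeasurableSpace α] {μ : Measure α} {ρ : α → α → ℝ} {ε : ℝ}

theorem isEntCover_iff {N : ℕ} :
    IsEntCover μ ρ ε N ↔ ∃ (C : Set α) (B : Fin N → Set α), MeasurableSet C ∧
      (∀ j, MeasurableSet (B j)) ∧ (∀ x, x ∈ C ∨ ∃ j, x ∈ B j) ∧ μ C < ENNReal.ofReal ε ∧
      ∀ j, ∀ x ∈ B j, ∀ y ∈ B j, ρ x y < ε := by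
  simp only [IsEntCover, Fin.exists_fin_succ_pi, Fin.forall_fin_succ, Fin.cons_zero, Fin.cons_succ,
    Set.eq_univ_iff_forall, Set.mem_iUnion, Fin.exists_fin_succ, ne_eq, not_true_eq_false,
    false_imp_iff, true_and, Fin.succ_ne_zero, not_false_eq_true, true_imp_iff, and_assoc]

theorem isEntCover_card {ι : Type*} [Fintype ι] {C : Set α} {B : ι → Set α}
    (hC : MeasurableSet C) (hB : ∀ i, MeasurableSet (B i)) (hcover : ∀ x, x ∈ C ∨ ∃ i, x ∈ B i)
    (hμC : μ C < ENNReal.ofReal ε) (hdiam : ∀ i, ∀ x ∈ B i, ∀ y ∈ B i, ρ x y < ε) :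
    IsEntCover μ ρ ε (Fintype.card ι) := by
  let e := Fintype.equivFin ι
  refine isEntCover_iff.2 ⟨C, B ∘ e.symm, hC, fun j => hB _, fun x => ?_, hμC, fun j => hdiam _⟩
  exact (hcover x).imp_right fun ⟨i, hi⟩ => ⟨e i, by simpa using hi⟩

theorem not_isEntCover_zero [IsProbabilityMeasure μ] (hε : ε ≤ 1) : ¬ IsEntCover μ ρ ε 0 := by
  rw [isEntCover_iff]
  rintro ⟨C, B, -, -, hcover, hμC, -⟩
  have hC : C = Set.univ := Set.eq_univ_of_forall fun x => (hcover x).resolve_right (by simp)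
  rw [hC, measure_univ, ENNReal.one_lt_ofReal] at hμC
  exact hμC.not_ge hε

theorem isEntCover_of_one_lt [IsProbabilityMeasure μ] (hε : 1 < ε) (N : ℕ) :
    IsEntCover μ ρ ε N :=
  isEntCover_iff.2 ⟨Set.univ, fun _ => ∅, .univ, fun _ => .empty, fun _ => Or.inl trivial,
    by simpa using hε, by simp⟩

theorem IsEntCover.measureReal_le [IsFiniteMeasure μ] {N : ℕ} (h : IsEntCover μ ρ ε N)
    {G : Set α} {m : ℝ}
    (hm : ∀ A : Set α, (∀ x ∈ A, ∀ y ∈ A, ρ x y < ε) → μ.real (A ∩ G) ≤ m) :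
    μ.real G ≤ ε + N * m := by
  obtain ⟨C, B, -, -, hcover, hμC, hdiam⟩ := isEntCover_iff.1 h
  have hG : G ⊆ C ∪ ⋃ j, B j ∩ G := fun x hx =>
    (hcover x).imp_right fun ⟨j, hj⟩ => Set.mem_iUnion.2 ⟨j, hj, hx⟩
  calc μ.real G ≤ μ.real C + ∑ j, μ.real (B j ∩ G) :=
        (measureReal_mono hG).trans <| (measureReal_union_le _ _).trans <|
          add_le_add_right (measureReal_iUnion_fintype_le _) _
    _ ≤ ε + ∑ _j : Fin N, m :=
        add_le_add (ENNReal.toReal_lt_of_lt_ofReal hμC).le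
          (Finset.sum_le_sum fun j _ => hm _ (hdiam j))
    _ = ε + N * m := by simp

theorem epsEntropy_nonneg (μ : Measure α) (ρ : α → α → ℝ) (ε : ℝ) : 0 ≤ epsEntropy μ ρ ε := by
  unfold epsEntropy
  rcases Nat.eq_zero_or_pos (sInf {k : ℕ | 0 < k ∧ IsEntCover μ ρ ε k}) with h | h
  · simp [h]
  · exact Real.logb_nonneg one_lt_two (by exact_mod_cast h)

theorem epsEntropy_eq_zero_of_one_lt [IsProbabilityMeasure μ] (hε : 1 < ε) :
    epsEntropy μ ρ ε = 0 := by
  have hmin : sInf {k : ℕ | 0 < k ∧ IsEntCover μ ρ ε k} ≤ 1 :=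
    Nat.sInf_le ⟨one_pos, isEntCover_of_one_lt hε 1⟩
  unfold epsEntropy
  interval_cases sInf {k : ℕ | 0 < k ∧ IsEntCover μ ρ ε k} <;> simp

theorem exists_two_rpow_epsEntropy_eq [IsProbabilityMeasure μ] (hε : ε ≤ 1)
    (hcov : ∃ k : ℕ, 0 < k ∧ IsEntCover μ ρ ε k) :
    ∃ n : ℕ, (2 : ℝ) ^ epsEntropy μ ρ ε = n + 1 ∧ ¬ IsEntCover μ ρ ε n := by
  have hmem : sInf {k : ℕ | 0 < k ∧ IsEntCover μ ρ ε k} ∈ _ := Nat.sInf_mem hcov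
  obtain ⟨n, hn⟩ := Nat.exists_eq_add_one.2 hmem.1
  refine ⟨n, ?_, fun hcover => ?_⟩
  · rw [epsEntropy, hn, Real.rpow_logb two_pos (by norm_num) (by positivity), Nat.cast_succ]
  · rcases n.eq_zero_or_pos with rfl | hpos
    · exact not_isEntCover_zero hε hcover
    · have := Nat.sInf_le (s := {k : ℕ | 0 < k ∧ IsEntCover μ ρ ε k}) ⟨hpos, hcover⟩
      omega

theorem le_epsEntropy {b : ℝ} (hcov : ∃ k : ℕ, 0 < k ∧ IsEntCover μ ρ ε k)
    (h : ∀ N : ℕ, IsEntCover μ ρ ε N → (2 : ℝ) ^ b ≤ N) : b ≤ epsEntropy μ ρ ε := by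
  obtain ⟨hpos, hcover⟩ := Nat.sInf_mem hcov
  exact (Real.le_logb_iff_rpow_le one_lt_two (by exact_mod_cast hpos)).2 (h _ hcover)

end Covers

section SmallBalls

variable {α : Type*} [MeasurableSpace α] {μ : Measure α} {ρ : α → α → ℝ}

theorem nonneg_of_symm_of_triangle {β : Type*} {d : β → β → ℝ} (hsymm : ∀ x y, d x y = d y x)
    (htri : ∀ x y z, d x z ≤ d x y + d y z) (x y : β) : 0 ≤ d x y := by
  linarith [htri x x x, htri x y x, hsymm x y]

theorem exists_greedy_union {ι : Type*} [Nonempty ι] (μ : Measure α) [IsFiniteMeasure μ]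
    {F : ι → Set α} (hF : ∀ i, MeasurableSet (F i)) (hfin : (Set.range F).Finite) (n : ℕ) :
    ∃ c : Fin n → ι, ∀ i, n * μ.real (F i \ ⋃ j, F (c j)) ≤ μ.real (⋃ j, F (c j)) := by
  induction n with
  | zero => exact ⟨Fin.elim0, by simp⟩
  | succ n ih =>
    obtain ⟨c, hc⟩ := ih
    set U := ⋃ j, F (c j) with hU
    -- The best possible gain never increases, so it is at most the average of the gains so far.
    obtain ⟨_, ⟨b, rfl⟩, hb⟩ := Set.exists_max_image (Set.range F) (fun s => μ.real (s \ U)) hfin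
      (Set.range_nonempty F)
    refine ⟨Fin.cons b c, fun i => ?_⟩
    have hunion : (⋃ j, F ((Fin.cons b c : Fin (n + 1) → ι) j)) = U ∪ (F b \ U) := by
      rw [Set.union_sdiff_self, Set.union_comm, hU]
      ext x
      simp only [Set.mem_iUnion, Fin.exists_fin_succ, Fin.cons_zero, Fin.cons_succ, Set.mem_union]
    have hUm : MeasurableSet U := .iUnion fun j => hF _
    rw [hunion, measureReal_union Set.disjoint_sdiff_right ((hF b).diff hUm)]
    have hmono : μ.real (F i \ (U ∪ (F b \ U))) ≤ μ.real (F i \ U) :=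
      measureReal_mono (Set.sdiff_subset_sdiff_right Set.subset_union_left)
    have hmax : μ.real (F i \ U) ≤ μ.real (F b \ U) := hb _ ⟨i, rfl⟩
    calc ((n + 1 : ℕ) : ℝ) * μ.real (F i \ (U ∪ (F b \ U)))
        ≤ (n + 1 : ℕ) * μ.real (F i \ U) := by gcongr
      _ = n * μ.real (F i \ U) + μ.real (F i \ U) := by push_cast; ring
      _ ≤ μ.real U + μ.real (F b \ U) := add_le_add (hc i) hmax

theorem exists_large_compl_of_not_isEntCover [IsProbabilityMeasure μ] {ι : Type*} [Nonempty ι]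
    {F : ι → Set α} (hF : ∀ i, MeasurableSet (F i)) (hfin : (Set.range F).Finite) {δ : ℝ}
    (hdiam : ∀ i, ∀ x ∈ F i, ∀ y ∈ F i, ρ x y < δ) {n : ℕ} (hnot : ¬ IsEntCover μ ρ δ n) :
    ∃ U, MeasurableSet U ∧ δ ≤ μ.real Uᶜ ∧ ∀ i, n * μ.real (F i \ U) ≤ 1 := by
  obtain ⟨c, hc⟩ := exists_greedy_union μ hF hfin n
  have hU : MeasurableSet (⋃ j, F (c j)) := .iUnion fun j => hF _
  refine ⟨⋃ j, F (c j), hU, ?_, fun i => (hc i).trans measureReal_le_one⟩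
  by_contra! hlt
  refine hnot (isEntCover_iff.2 ⟨_, fun j => F (c j), hU.compl, fun j => hF _, fun x => ?_,
    (ENNReal.lt_ofReal_iff_toReal_lt (measure_ne_top _ _)).2 hlt, fun j => hdiam _⟩)
  rw [← Set.mem_iUnion]
  exact (em _).symm

theorem IsEntCover.exists_finite_ball_hulls {ε : ℝ} {N : ℕ} (h : IsEntCover μ ρ ε N)
    (hsymm : ∀ x y, ρ x y = ρ y x) (htri : ∀ x y z, ρ x z ≤ ρ x y + ρ y z) :
    ∃ (C : Set α) (F : α → Set α), MeasurableSet C ∧ μ C < ENNReal.ofReal ε ∧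
      (Set.range F).Finite ∧ (∀ a, MeasurableSet (F a)) ∧
      (∀ a, ∀ x ∉ C, ρ x a < ε → x ∈ F a) ∧ ∀ a, ∀ x ∈ F a, ∀ y ∈ F a, ρ x y < 4 * ε := by
  obtain ⟨C, B, hC, hB, hcover, hμC, hdiam⟩ := isEntCover_iff.1 h
  -- Rounding each ball up to a union of pieces leaves finitely many sets for the greedy choice.
  let T : Set (Fin N) → Set α := fun t => ⋃ j ∈ t, B j
  let near : α → Set (Fin N) := fun a => {j | ∃ z ∈ B j, ρ z a < ε}
  have hclose : ∀ a, ∀ x ∈ T (near a), ρ x a < 2 * ε := by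
    intro a x hx
    obtain ⟨j, ⟨z, hz, hza⟩, hxj⟩ := Set.mem_iUnion₂.1 hx
    linarith [htri x z a, hdiam j x hxj z hz]
  refine ⟨C, T ∘ near, hC, hμC, (Set.finite_range T).subset (Set.range_comp_subset_range _ _),
    fun a => .biUnion (Set.to_countable _) fun j _ => hB j, fun a x hxC hxa => ?_,
    fun a x hx y hy => ?_⟩
  · obtain ⟨j, hj⟩ := (hcover x).resolve_left hxC
    exact Set.mem_iUnion₂.2 ⟨j, ⟨x, hj, hxa⟩, hj⟩
  · linarith [htri x a y, hclose a x hx, hclose a y hy, hsymm a y]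

theorem exists_measurableSet_small_balls [IsProbabilityMeasure μ] (hsymm : ∀ x y, ρ x y = ρ y x)
    (htri : ∀ x y z, ρ x z ≤ ρ x y + ρ y z) (hadm : Admissible μ ρ) {ε : ℝ} (hε : 0 < ε)
    (hε4 : 4 * ε ≤ 1) :
    ∃ Y, MeasurableSet Y ∧ 3 * ε ≤ μ.real Y ∧
      ∀ a, ((2 : ℝ) ^ epsEntropy μ ρ (4 * ε) - 1) * μ.real {x ∈ Y | ρ x a < ε} ≤ 1 := by
  obtain ⟨n, hn, hnot⟩ := exists_two_rpow_epsEntropy_eq hε4 (hadm (4 * ε) (by positivity))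
  obtain ⟨N, -, hcover⟩ := hadm ε hε
  obtain ⟨C, F, hC, hμC, hfin, hF, hball, hdiam⟩ := hcover.exists_finite_ball_hulls hsymm htri
  have : Nonempty α := nonempty_of_isProbabilityMeasure μ
  obtain ⟨U, hU, hUc, hFU⟩ := exists_large_compl_of_not_isEntCover hF hfin hdiam hnot
  refine ⟨Uᶜ \ C, hU.compl.diff hC, ?_, fun a => ?_⟩
  · have hCε : μ.real C < ε := ENNReal.toReal_lt_of_lt_ofReal hμC
    linarith [le_measureReal_sdiff (μ := μ) (s₁ := Uᶜ) (s₂ := C)]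
  · have hsub : {x ∈ Uᶜ \ C | ρ x a < ε} ⊆ F a \ U := fun x ⟨⟨hxU, hxC⟩, hxa⟩ =>
      ⟨hball a x hxC hxa, hxU⟩
    rw [hn, add_sub_cancel_right]
    exact (mul_le_mul_of_nonneg_left (measureReal_mono hsub) n.cast_nonneg).trans (hFU a)

end SmallBalls

theorem integral_le_add_mul_measureReal {Ω : Type*} [MeasurableSpace Ω] {P : Measure Ω}
    [IsProbabilityMeasure P] {f : Ω → ℝ} (hfm : Measurable f) (hf : Integrable f P) {a M : ℝ}
    (ha : 0 ≤ a) (hM : ∀ x, f x ≤ M) : ∫ x, f x ∂P ≤ a + M * P.real {x | a ≤ f x} := by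
  have hE : MeasurableSet {x | a ≤ f x} := measurableSet_le measurable_const hfm
  have hint : Integrable ({x | a ≤ f x}.indicator fun _ => M) P :=
    (integrable_const M).indicator hE
  calc ∫ x, f x ∂P ≤ ∫ x, (a + {x | a ≤ f x}.indicator (fun _ => M) x) ∂P := by
        refine integral_mono hf ((integrable_const a).add hint) fun x => ?_
        by_cases hx : a ≤ f x
        · simpa [hx] using (hM x).trans (le_add_of_nonneg_left ha)
        · simpa [hx] using (not_le.1 hx).le
    _ = a + M * P.real {x | a ≤ f x} := by
        rw [integral_add (integrable_const a) hint, integral_indicator_const _ hE, integral_const,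
          probReal_univ, one_smul, smul_eq_mul, mul_comm]

theorem integrable_one_add_indicator {Ω : Type*} [MeasurableSpace Ω] {P : Measure Ω}
    [IsFiniteMeasure P] {E : Set Ω} (hE : MeasurableSet E) (b : ℝ) :
    Integrable (fun x => 1 + E.indicator (fun _ => b) x) P :=
  (integrable_const 1).add ((integrable_const b).indicator hE)

theorem two_rpow_div_two_le {ε T : ℝ} (hε : 0 < ε) (hε4 : 4 * ε ≤ 1) (hT : 1 ≤ ε ^ 3 * T) :
    (2 : ℝ) ^ (ε ^ 3 * T) / 2 ≤ 2 ^ ((ε - ε ^ 3) * T) * (2 * ε - ε ^ 4) := by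
  have hT0 : 0 < T := pos_of_mul_pos_right (one_pos.trans_le hT) (by positivity)
  set t := (ε - 2 * ε ^ 3) * T with ht
  have htε : 1 ≤ t * ε := by
    have hle : ε ≤ 1 - 2 * ε ^ 2 := by nlinarith
    have hcube : ε ^ 3 ≤ (ε - 2 * ε ^ 3) * ε := by
      linarith [mul_le_mul_of_nonneg_left hle (sq_nonneg ε)]
    calc (1 : ℝ) ≤ ε ^ 3 * T := hT
      _ ≤ (ε - 2 * ε ^ 3) * ε * T := by gcongr
      _ = t * ε := by ring
  have ht1 : 1 ≤ t := by nlinarith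
  have hbernoulli : t ≤ (2 : ℝ) ^ t := by
    have := one_add_mul_self_le_rpow_one_add (s := 1) (by norm_num) ht1
    norm_num at this
    linarith
  have hε' : ε ≤ 2 * ε - ε ^ 4 := by
    have : ε ^ 4 ≤ ε := pow_le_of_le_one hε.le (by linarith) (by norm_num)
    linarith
  calc (2 : ℝ) ^ (ε ^ 3 * T) / 2 ≤ 2 ^ (ε ^ 3 * T) * (2 ^ t * ε) := by
        rw [div_eq_mul_inv]
        gcongr
        nlinarith
    _ = 2 ^ ((ε - ε ^ 3) * T) * ε := by
        rw [← mul_assoc, ← Real.rpow_add two_pos, ht]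
        ring_nf
    _ ≤ 2 ^ ((ε - ε ^ 3) * T) * (2 * ε - ε ^ 4) := by gcongr

section Product

variable {ι : Type*} [Fintype ι] {X : ι → Type*}

/-- The average of the coordinate semimetrics `ρ i` with weights `s i`. For `∑ i, s i = 0` it is
identically `0`. -/
noncomputable def weightedAverage (s : ι → ℝ) (ρ : ∀ i, X i → X i → ℝ) (x y : ∀ i, X i) : ℝ :=
  (∑ i, s i)⁻¹ * ∑ i, s i * ρ i (x i) (y i)

/-- The total weight of the coordinates of `x` that lie in the prescribed sets `Y i`; a random
variable when `x` is drawn from a product measure. -/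
noncomputable def hitWeight (s : ι → ℝ) (Y : ∀ i, Set (X i)) (x : ∀ i, X i) : ℝ :=
  ∑ i, (Y i).indicator (fun _ => s i) (x i)

theorem weightedAverage_lt {s : ι → ℝ} (hs : ∀ i, 0 ≤ s i) {ρ : ∀ i, X i → X i → ℝ} {δ : ℝ}
    (hδ : 0 < δ) {x y : ∀ i, X i} (h : ∀ i, ρ i (x i) (y i) < δ) :
    weightedAverage s ρ x y < δ := by
  rcases (Finset.sum_nonneg fun i _ => hs i).eq_or_lt' with hS | hS
  · rwa [weightedAverage, hS, inv_zero, zero_mul]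
  obtain ⟨i, hi, hsi⟩ := Finset.exists_lt_of_sum_lt (f := fun _ : ι => (0 : ℝ)) (by simpa using hS)
  rw [weightedAverage, inv_mul_lt_iff₀ hS, Finset.sum_mul]
  exact Finset.sum_lt_sum (fun i _ => mul_le_mul_of_nonneg_left (h i).le (hs i))
    ⟨i, hi, mul_lt_mul_of_pos_left (h i) hsi⟩

theorem hitWeight_le {s : ι → ℝ} (hs : ∀ i, 0 ≤ s i) (Y : ∀ i, Set (X i)) (x : ∀ i, X i) :
    hitWeight s Y x ≤ ∑ i, s i :=
  Finset.sum_le_sum fun i _ => Set.indicator_le_self' (f := fun _ => s i) (fun _ _ => hs i) (x i)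

theorem hitWeight_le_hitWeight_add {s : ι → ℝ} (hs : ∀ i, 0 ≤ s i) {ρ : ∀ i, X i → X i → ℝ}
    (hρ : ∀ i x y, 0 ≤ ρ i x y) {r : ℝ} (hr : 0 < r) {a : ∀ i, X i} {Y D : ∀ i, Set (X i)}
    (hD : ∀ i, {y ∈ Y i | ρ i y (a i) < r} ⊆ D i) (x : ∀ i, X i) :
    hitWeight s Y x ≤ hitWeight s D x + r⁻¹ * ∑ i, s i * ρ i (x i) (a i) := by
  rw [hitWeight, hitWeight, Finset.mul_sum, ← Finset.sum_add_distrib]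
  refine Finset.sum_le_sum fun i _ => ?_
  have hDnn : 0 ≤ (D i).indicator (fun _ => s i) (x i) :=
    Set.indicator_nonneg (fun _ _ => hs i) _
  have hρnn : 0 ≤ r⁻¹ * (s i * ρ i (x i) (a i)) :=
    mul_nonneg (by positivity) (mul_nonneg (hs i) (hρ i _ _))
  by_cases hxY : x i ∈ Y i
  · rw [Set.indicator_of_mem hxY]
    rcases lt_or_ge (ρ i (x i) (a i)) r with hlt | hge
    · rw [Set.indicator_of_mem (hD i ⟨hxY, hlt⟩)]
      exact le_add_of_nonneg_right hρnn
    · refine le_add_of_nonneg_of_le hDnn ((le_inv_mul_iff₀ hr).2 ?_)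
      rw [mul_comm]
      exact mul_le_mul_of_nonneg_left hge (hs i)
  · rw [Set.indicator_of_notMem hxY]
    exact add_nonneg hDnn hρnn

theorem two_rpow_mul_hitWeight (c : ℝ) (s : ι → ℝ) (D : ∀ i, Set (X i)) (x : ∀ i, X i) :
    (2 : ℝ) ^ (c * hitWeight s D x) =
      ∏ i, (1 + (D i).indicator (fun _ => (2 : ℝ) ^ (c * s i) - 1) (x i)) := by
  rw [hitWeight, Finset.mul_sum, Real.rpow_sum_of_pos two_pos]
  refine Finset.prod_congr rfl fun i _ => ?_
  by_cases hx : x i ∈ D i <;> simp [hx]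

variable [∀ i, MeasurableSpace (X i)] {μ : ∀ i, Measure (X i)} [∀ i, IsProbabilityMeasure (μ i)]
  {ρ : ∀ i, X i → X i → ℝ} {s : ι → ℝ}

theorem IsEntCover.weightedAverage {N : ι → ℕ} {δ δ' : ℝ}
    (h : ∀ i, IsEntCover (μ i) (ρ i) δ' (N i)) (hs : ∀ i, 0 ≤ s i) (hδ' : 0 < δ')
    (hδ : (Fintype.card ι + 1) * δ' ≤ δ) :
    IsEntCover (Measure.pi μ) (weightedAverage s ρ) δ (∏ i, N i) := by
  classical
  choose C B hC hB hcover hμC hdiam using fun i => isEntCover_iff.1 (h i)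
  have hlt : Fintype.card ι * δ' < δ := by linarith
  have hle : δ' ≤ δ := le_trans (le_mul_of_one_le_left hδ'.le (by simp)) hδ
  have hcard : ∏ i, N i = Fintype.card (∀ i, Fin (N i)) := by simp
  rw [hcard]
  refine isEntCover_card (C := ⋃ i, (fun x : ∀ i, X i => x i) ⁻¹' C i)
    (B := fun g => Set.univ.pi fun i => B i (g i))
    (.iUnion fun i => measurable_pi_apply i (hC i)) (fun g => .univ_pi fun i => hB i _)
    (fun x => ?_) ?_ fun g x hx y hy =>
      weightedAverage_lt hs (hδ'.trans_le hle) fun i =>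
        (hdiam i _ _ (hx i trivial) _ (hy i trivial)).trans_le hle
  · by_cases hx : ∃ i, x i ∈ C i
    · exact Or.inl (Set.mem_iUnion.2 hx)
    · push Not at hx
      choose g hg using fun i => (hcover i (x i)).resolve_left (hx i)
      exact Or.inr ⟨g, fun i _ => hg i⟩
  · calc Measure.pi μ (⋃ i, (fun x : ∀ i, X i => x i) ⁻¹' C i)
        ≤ ∑ i, Measure.pi μ ((fun x : ∀ i, X i => x i) ⁻¹' C i) := measure_iUnion_fintype_le _ _
      _ = ∑ i, μ i (C i) := Finset.sum_congr rfl fun i _ =>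
          (measurePreserving_eval μ i).measure_preimage (hC i).nullMeasurableSet
      _ ≤ ∑ _i : ι, ENNReal.ofReal δ' := Finset.sum_le_sum fun i _ => (hμC i).le
      _ = ENNReal.ofReal (Fintype.card ι * δ') := by
          rw [← ENNReal.ofReal_sum_of_nonneg fun _ _ => hδ'.le]
          simp
      _ < ENNReal.ofReal δ := (ENNReal.ofReal_lt_ofReal_iff (hδ'.trans_le hle)).2 hlt

theorem Admissible.weightedAverage (hadm : ∀ i, Admissible (μ i) (ρ i)) (hs : ∀ i, 0 ≤ s i) :
    Admissible (Measure.pi μ) (weightedAverage s ρ) := by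
  intro δ hδ
  have hδ' : 0 < δ / (Fintype.card ι + 1) := by positivity
  choose N hN hcover using fun i => hadm i _ hδ'
  exact ⟨∏ i, N i, Finset.prod_pos fun i _ => hN i,
    IsEntCover.weightedAverage hcover hs hδ' (mul_div_cancel₀ _ (by positivity)).le⟩

theorem measurable_hitWeight (s : ι → ℝ) {Y : ∀ i, Set (X i)} (hY : ∀ i, MeasurableSet (Y i)) :
    Measurable (hitWeight s Y) :=
  Finset.measurable_sum _ fun i _ =>
    (measurable_const.indicator (hY i)).comp (measurable_pi_apply i)

theorem integrable_indicator_eval {Y : ∀ i, Set (X i)} (hY : ∀ i, MeasurableSet (Y i)) (i : ι) :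
    Integrable (fun x : ∀ i, X i => (Y i).indicator (fun _ => s i) (x i)) (Measure.pi μ) :=
  integrable_comp_eval (f := (Y i).indicator fun _ => s i)
    ((integrable_const (s i)).indicator (hY i))

theorem integrable_hitWeight {Y : ∀ i, Set (X i)} (hY : ∀ i, MeasurableSet (Y i)) :
    Integrable (hitWeight s Y) (Measure.pi μ) :=
  integrable_finsetSum _ fun i _ => integrable_indicator_eval hY i

theorem integral_hitWeight {Y : ∀ i, Set (X i)} (hY : ∀ i, MeasurableSet (Y i)) :
    ∫ x, hitWeight s Y x ∂Measure.pi μ = ∑ i, (μ i).real (Y i) * s i := by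
  simp only [hitWeight]
  rw [integral_finsetSum _ fun i _ => integrable_indicator_eval hY i]
  refine Finset.sum_congr rfl fun i _ => ?_
  rw [integral_comp_eval (f := (Y i).indicator fun _ => s i)
    (measurable_const.indicator (hY i)).aestronglyMeasurable,
    integral_indicator_const _ (hY i), smul_eq_mul]

theorem sub_le_measureReal_le_hitWeight (hs : ∀ i, 0 ≤ s i) (hS : 0 < ∑ i, s i)
    {Y : ∀ i, Set (X i)} (hY : ∀ i, MeasurableSet (Y i)) {p q : ℝ} (hq : 0 ≤ q)
    (hp : ∀ i, p ≤ (μ i).real (Y i)) :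
    p - q ≤ (Measure.pi μ).real {x | q * ∑ i, s i ≤ hitWeight s Y x} := by
  have hmean : p * ∑ i, s i ≤ ∫ x, hitWeight s Y x ∂Measure.pi μ := by
    rw [integral_hitWeight hY, Finset.mul_sum]
    exact Finset.sum_le_sum fun i _ => mul_le_mul_of_nonneg_right (hp i) (hs i)
  have hmarkov := integral_le_add_mul_measureReal (measurable_hitWeight s hY)
    (integrable_hitWeight hY) (P := Measure.pi μ) (mul_nonneg hq hS.le) (hitWeight_le hs Y)
  refine le_of_mul_le_mul_right ?_ hS
  linarith

theorem integrable_two_rpow_mul_hitWeight (c : ℝ) {D : ∀ i, Set (X i)}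
    (hD : ∀ i, MeasurableSet (D i)) :
    Integrable (fun x => (2 : ℝ) ^ (c * hitWeight s D x)) (Measure.pi μ) := by
  simp only [two_rpow_mul_hitWeight]
  exact Integrable.fintype_prod_dep
    (f := fun i x => 1 + (D i).indicator (fun _ => (2 : ℝ) ^ (c * s i) - 1) x)
    fun i => integrable_one_add_indicator (hD i) _

theorem integral_two_rpow_mul_hitWeight (c : ℝ) {D : ∀ i, Set (X i)}
    (hD : ∀ i, MeasurableSet (D i)) :
    ∫ x, (2 : ℝ) ^ (c * hitWeight s D x) ∂Measure.pi μ =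
      ∏ i, (1 + ((2 : ℝ) ^ (c * s i) - 1) * (μ i).real (D i)) := by
  simp only [two_rpow_mul_hitWeight]
  rw [integral_fintype_prod_eq_prod
    fun i x => 1 + (D i).indicator (fun _ => (2 : ℝ) ^ (c * s i) - 1) x]
  refine Finset.prod_congr rfl fun i _ => ?_
  rw [integral_add (integrable_const 1) ((integrable_const _).indicator (hD i)),
    integral_indicator_const _ (hD i), integral_const, probReal_univ, one_smul, smul_eq_mul,
    mul_comm]

theorem two_rpow_mul_measureReal_le_hitWeight {c : ℝ} (hc : 0 ≤ c) {D : ∀ i, Set (X i)}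
    (hD : ∀ i, MeasurableSet (D i))
    (hsmall : ∀ i, ((2 : ℝ) ^ (c * s i) - 1) * (μ i).real (D i) ≤ 1) (a : ℝ) :
    (2 : ℝ) ^ (c * a) * (Measure.pi μ).real {x | a ≤ hitWeight s D x} ≤
      2 ^ Fintype.card ι := by
  have hfactor : ∀ i, 0 ≤ 1 + ((2 : ℝ) ^ (c * s i) - 1) * (μ i).real (D i) := fun i => by
    have hpow : (0 : ℝ) ≤ 2 ^ (c * s i) * (μ i).real (D i) := by positivity
    linarith [measureReal_le_one (μ := μ i) (s := D i)]
  calc (2 : ℝ) ^ (c * a) * (Measure.pi μ).real {x | a ≤ hitWeight s D x}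
      ≤ 2 ^ (c * a) *
          (Measure.pi μ).real {x | (2 : ℝ) ^ (c * a) ≤ 2 ^ (c * hitWeight s D x)} := by
        refine mul_le_mul_of_nonneg_left (measureReal_mono fun x hx => ?_) (by positivity)
        exact Real.rpow_le_rpow_of_exponent_le one_le_two (mul_le_mul_of_nonneg_left hx hc)
    _ ≤ ∫ x, (2 : ℝ) ^ (c * hitWeight s D x) ∂Measure.pi μ :=
        mul_meas_ge_le_integral_of_nonneg (ae_of_all _ fun x => by positivity)
          (integrable_two_rpow_mul_hitWeight c hD) _
    _ = ∏ i, (1 + ((2 : ℝ) ^ (c * s i) - 1) * (μ i).real (D i)) :=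
        integral_two_rpow_mul_hitWeight c hD
    _ ≤ ∏ _i : ι, (2 : ℝ) :=
        Finset.prod_le_prod (fun i _ => hfactor i) fun i _ => by linarith [hsmall i]
    _ = 2 ^ Fintype.card ι := by simp

theorem two_rpow_mul_measureReal_inter_le (hρ : ∀ i x y, 0 ≤ ρ i x y) (hs : ∀ i, 0 ≤ s i)
    (hS : 0 < ∑ i, s i) {c : ℝ} (hc : 0 ≤ c) {r : ℝ} (hr : 0 < r) {Y : ∀ i, Set (X i)}
    (hY : ∀ i a, ((2 : ℝ) ^ (c * s i) - 1) * (μ i).real {x ∈ Y i | ρ i x a < r} ≤ 1) (q δ : ℝ)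
    {A : Set (∀ i, X i)} (hA : ∀ x ∈ A, ∀ y ∈ A, weightedAverage s ρ x y < r * δ) :
    (2 : ℝ) ^ (c * ((q - δ) * ∑ i, s i)) *
      (Measure.pi μ).real (A ∩ {x | q * ∑ i, s i ≤ hitWeight s Y x}) ≤ 2 ^ Fintype.card ι := by
  rcases A.eq_empty_or_nonempty with rfl | ⟨a, ha⟩
  · simp
  let D : ∀ i, Set (X i) := fun i => toMeasurable (μ i) {x ∈ Y i | ρ i x (a i) < r}
  have hDsmall : ∀ i, ((2 : ℝ) ^ (c * s i) - 1) * (μ i).real (D i) ≤ 1 := fun i => by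
    simpa only [D, measureReal_def, measure_toMeasurable] using hY i (a i)
  refine le_trans (mul_le_mul_of_nonneg_left (measureReal_mono ?_) (by positivity))
    (two_rpow_mul_measureReal_le_hitWeight hc (fun i => measurableSet_toMeasurable _ _) hDsmall _)
  rintro x ⟨hxA, hxq : q * ∑ i, s i ≤ hitWeight s Y x⟩
  have hclose : r⁻¹ * ∑ i, s i * ρ i (x i) (a i) ≤ δ * ∑ i, s i := by
    have := (inv_mul_lt_iff₀ hS).1 (hA x hxA a ha)
    rw [inv_mul_le_iff₀ hr]
    linarith
  have hhit := hitWeight_le_hitWeight_add hs hρ hr (D := D)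
    (fun i => subset_toMeasurable (μ i) {x ∈ Y i | ρ i x (a i) < r}) x
  change (q - δ) * ∑ i, s i ≤ hitWeight s D x
  linarith

theorem le_one_of_sum_pos_of_le_epsEntropy {b : ι → ℝ} {δ : ℝ}
    (hb : ∀ i, b i ≤ epsEntropy (μ i) (ρ i) δ) (hpos : 0 < ∑ i, b i) : δ ≤ 1 := by
  by_contra! hδ
  exact hpos.not_ge <| Finset.sum_nonpos fun i _ =>
    (hb i).trans (epsEntropy_eq_zero_of_one_lt hδ).le

theorem two_rpow_le_of_isEntCover_weightedAverage (hsymm : ∀ i x y, ρ i x y = ρ i y x)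
    (htri : ∀ i x y z, ρ i x z ≤ ρ i x y + ρ i y z) (hadm : ∀ i, Admissible (μ i) (ρ i))
    {ε c : ℝ} (hε : 0 < ε) (hs : ∀ i, 0 ≤ s i)
    (hc : ∀ i, c * s i ≤ epsEntropy (μ i) (ρ i) (4 * ε)) (hlarge : 1 ≤ ε ^ 3 * (c * ∑ i, s i))
    {N : ℕ} (hN : IsEntCover (Measure.pi μ) (weightedAverage s ρ) (ε ^ 4) N) :
    (2 : ℝ) ^ (ε ^ 3 * (c * ∑ i, s i) - Fintype.card ι - 1) ≤ N := by
  have hcS : 0 < c * ∑ i, s i := pos_of_mul_pos_right (one_pos.trans_le hlarge) (by positivity)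
  have hc0 : 0 < c := pos_of_mul_pos_left hcS (Finset.sum_nonneg fun i _ => hs i)
  have hS : 0 < ∑ i, s i := pos_of_mul_pos_right hcS hc0.le
  have hε4 : 4 * ε ≤ 1 := le_one_of_sum_pos_of_le_epsEntropy hc (by rwa [← Finset.mul_sum])
  choose Y hYm hYlarge hYball using fun i =>
    exists_measurableSet_small_balls (hsymm i) (htri i) (hadm i) hε hε4
  have hball : ∀ i a, ((2 : ℝ) ^ (c * s i) - 1) * (μ i).real {x ∈ Y i | ρ i x a < ε} ≤ 1 :=
    fun i a => (mul_le_mul_of_nonneg_right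
      (sub_le_sub_right (Real.rpow_le_rpow_of_exponent_le one_le_two (hc i)) 1)
      measureReal_nonneg).trans (hYball i a)
  set G := {x | ε * ∑ i, s i ≤ hitWeight s Y x}
  set K : ℝ := 2 ^ ((ε - ε ^ 3) * (c * ∑ i, s i)) with hK
  have hK0 : 0 < K := by positivity
  have hpiece : ∀ A : Set (∀ i, X i), (∀ x ∈ A, ∀ y ∈ A, weightedAverage s ρ x y < ε ^ 4) →
      (Measure.pi μ).real (A ∩ G) ≤ 2 ^ Fintype.card ι / K := by
    intro A hA
    rw [le_div_iff₀' hK0, hK, mul_left_comm]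
    exact two_rpow_mul_measureReal_inter_le
      (fun i => nonneg_of_symm_of_triangle (hsymm i) (htri i)) hs hS hc0.le hε hball ε (ε ^ 3)
      (by simpa only [← pow_succ'] using hA)
  have hmass : 2 * ε - ε ^ 4 ≤ N * (2 ^ Fintype.card ι / K) := by
    linarith [hN.measureReal_le hpiece, sub_le_measureReal_le_hitWeight hs hS hYm hε.le hYlarge]
  rw [sub_right_comm, Real.rpow_sub_natCast two_ne_zero, Real.rpow_sub_one two_ne_zero,
    div_le_iff₀ (by positivity)]
  calc (2 : ℝ) ^ (ε ^ 3 * (c * ∑ i, s i)) / 2 ≤ K * (2 * ε - ε ^ 4) :=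
        two_rpow_div_two_le hε hε4 hlarge
    _ ≤ K * (N * (2 ^ Fintype.card ι / K)) := by gcongr
    _ = N * 2 ^ Fintype.card ι := by field_simp

theorem epsEntropy_product_lower_bound_general (hsymm : ∀ i x y, ρ i x y = ρ i y x)
    (htri : ∀ i x y z, ρ i x z ≤ ρ i x y + ρ i y z) (hadm : ∀ i, Admissible (μ i) (ρ i))
    {ε c : ℝ} (hε : 0 < ε) (hs : ∀ i, 0 ≤ s i)
    (hc : ∀ i, c * s i ≤ epsEntropy (μ i) (ρ i) (4 * ε)) :
    ε ^ 3 * (c * ∑ i, s i) - Fintype.card ι - 1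
      ≤ epsEntropy (Measure.pi μ) (weightedAverage s ρ) (ε ^ 4) := by
  rcases le_total (ε ^ 3 * (c * ∑ i, s i)) 1 with hsmall | hlarge
  · have hnonneg := epsEntropy_nonneg (Measure.pi μ) (weightedAverage s ρ) (ε ^ 4)
    linarith [(Fintype.card ι).cast_nonneg (α := ℝ)]
  · exact le_epsEntropy (Admissible.weightedAverage hadm hs _ (by positivity)) fun N hN =>
      two_rpow_le_of_isEntCover_weightedAverage hsymm htri hadm hε hs hc hlarge hN

end Product

/-- Lemma 7: for admissible semimetric triples `(Xᵢ, μᵢ, ρᵢ)` and weights `sᵢ` with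
`sᵢ/φ < ℍ_{4ε}(Xᵢ, μᵢ, ρᵢ) < sᵢ` (`0 < ε < 1/10`, `φ > 1`), the weighted average
semimetric `ρ(x,y) = (Σ sᵢ)⁻¹ Σ sᵢ ρᵢ(xᵢ, yᵢ)` on the product space satisfies
`ℍ_{ε⁴}(X, μ, ρ) ≥ (ε³/φ) Σ ℍ_{4ε}(Xᵢ, μᵢ, ρᵢ) − k − 1`. -/
theorem epsEntropy_product_lower_bound {k : ℕ} (X : Fin k → Type*)
    [∀ i, MeasurableSpace (X i)]
    (μ : ∀ i, Measure (X i)) [∀ i, IsProbabilityMeasure (μ i)]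
    (ρ : ∀ i, X i → X i → ℝ)
    (hnonneg : ∀ i x y, 0 ≤ ρ i x y) (hsymm : ∀ i x y, ρ i x y = ρ i y x)
    (htri : ∀ i x y z, ρ i x z ≤ ρ i x y + ρ i y z)
    (hadm : ∀ i, Admissible (μ i) (ρ i))
    (ε φ : ℝ) (hε0 : 0 < ε) (hε1 : ε < 1 / 10) (hφ : 1 < φ)
    (s : Fin k → ℝ)
    (hlb : ∀ i, s i / φ < epsEntropy (μ i) (ρ i) (4 * ε))
    (hub : ∀ i, epsEntropy (μ i) (ρ i) (4 * ε) < s i)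
    (P : (∀ i, X i) → (∀ i, X i) → ℝ)
    (hP : P = fun x y => (∑ i, s i)⁻¹ * ∑ i, s i * ρ i (x i) (y i)) :
    ε ^ 3 / φ * ∑ i, epsEntropy (μ i) (ρ i) (4 * ε) - k - 1
      ≤ epsEntropy (Measure.pi μ) P (ε ^ 4) := by
  subst hP
  have : 0 < φ := one_pos.trans hφ
  refine le_trans ?_ (epsEntropy_product_lower_bound_general hsymm htri hadm (c := φ⁻¹) hε0
    (fun i => (epsEntropy_nonneg _ _ _).trans (hub i).le)
    fun i => (inv_mul_eq_div φ (s i)).trans_le (hlb i).le)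
  rw [Fintype.card_fin, ← mul_assoc, ← div_eq_mul_inv]
  gcongr with i
  exact (hub i).le
end
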